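/- arXiv:2405.10797 — 11 statements merged into one kernel-verified Lean document; each statement's English description precedes it below -/
import Mathlib

section
/- The convex hull Δ in ℝ⁴ of the eight points (0,0,0,0), (1,0,0,0), (0,1,0,0), (0,0,1,0), (0,0,0,1), (0,1,0,1), (0,1,1,0), (0,0,0,2) has 4-dimensional Lebesgue measure 5/24. -/
open MeasureTheory

/-- The Okounkov body Δ of the quintic Del Pezzo fourfold `M₄`:
the convex hull in ℝ⁴ of the eight points
(0,0,0,0), (1,0,0,0), (0,1,0,0), (0,0,1,0), (0,0,0,1), (0,1,0,1), (0,1,1,0), (0,0,0,2). -/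
noncomputable def DeltaM4 : Set (Fin 4 → ℝ) :=
  convexHull ℝ
    ({![0,0,0,0], ![1,0,0,0], ![0,1,0,0], ![0,0,1,0],
      ![0,0,0,1], ![0,1,0,1], ![0,1,1,0], ![0,0,0,2]} : Set (Fin 4 → ℝ))

def HM4 : Set (Fin 4 → ℝ) :=
  {p | 0 ≤ p 0 ∧ 0 ≤ p 1 ∧ 0 ≤ p 2 ∧ 0 ≤ p 3 ∧ p 0 + p 1 ≤ 1 ∧
    2 * p 0 + 2 * p 2 + p 3 ≤ 2 ∧ 2 * p 0 + p 1 + p 2 + p 3 ≤ 2}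

theorem combo_mem (w0 w1 w2 w3 w4 w5 w6 w7 : ℝ) (h0 : 0 ≤ w0) (h1 : 0 ≤ w1) (h2 : 0 ≤ w2)
    (h3 : 0 ≤ w3) (h4 : 0 ≤ w4) (h5 : 0 ≤ w5) (h6 : 0 ≤ w6) (h7 : 0 ≤ w7)
    (hs : w0 + w1 + w2 + w3 + w4 + w5 + w6 + w7 = 1) (p : Fin 4 → ℝ)
    (e0 : p 0 = w1) (e1 : p 1 = w2 + w5 + w6) (e2 : p 2 = w3 + w6)
    (e3 : p 3 = w4 + w5 + 2 * w7) : p ∈ DeltaM4 := by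
  have key := (convex_convexHull ℝ
    ({![0,0,0,0], ![1,0,0,0], ![0,1,0,0], ![0,0,1,0],
      ![0,0,0,1], ![0,1,0,1], ![0,1,1,0], ![0,0,0,2]} : Set (Fin 4 → ℝ))).sum_mem
    (t := Finset.univ) (w := ![w0, w1, w2, w3, w4, w5, w6, w7])
    (z := ![![0,0,0,0], ![1,0,0,0], ![0,1,0,0], ![0,0,1,0],
      ![0,0,0,1], ![0,1,0,1], ![0,1,1,0], ![0,0,0,2]])
    (by intro i _; fin_cases i <;> simpa)
    (by simp [Fin.sum_univ_succ]; linarith)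
    (by intro i _; apply subset_convexHull; fin_cases i <;> simp)
  unfold DeltaM4
  convert key using 1
  ext i
  fin_cases i <;> simp [Fin.sum_univ_succ, e0, e1, e2, e3] <;> ring

theorem HM4_convex : Convex ℝ HM4 := by
  rintro x ⟨a1, a2, a3, a4, a5, a6, a7⟩ y ⟨b1, b2, b3, b4, b5, b6, b7⟩ s t hs ht hst
  obtain rfl : t = 1 - s := by linarith
  refine ⟨?_, ?_, ?_, ?_, ?_, ?_, ?_⟩ <;> simp only [Pi.add_apply, Pi.smul_apply, smul_eq_mul]
  · positivity
  · positivity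
  · positivity
  · positivity
  · nlinarith [mul_le_mul_of_nonneg_left a5 hs, mul_le_mul_of_nonneg_left b5 ht]
  · nlinarith [mul_le_mul_of_nonneg_left a6 hs, mul_le_mul_of_nonneg_left b6 ht]
  · nlinarith [mul_le_mul_of_nonneg_left a7 hs, mul_le_mul_of_nonneg_left b7 ht]

theorem Delta_eq : DeltaM4 = HM4 := by
  apply Set.Subset.antisymm
  · apply convexHull_min _ HM4_convex
    intro p hp
    simp only [Set.mem_insert_iff, Set.mem_singleton_iff] at hp
    rcases hp with rfl | rfl | rfl | rfl | rfl | rfl | rfl | rfl <;> simp [HM4] <;> norm_num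
  · rintro p ⟨a1, a2, a3, a4, a5, a6, a7⟩
    rcases le_total (p 1) (p 2) with h | h
    · apply combo_mem (1 - p 0 - p 2 - p 3 / 2) (p 0) 0 (p 2 - p 1) 0 0 (p 1) (p 3 / 2) <;> linarith
    · rcases le_total (p 3) (p 1 - p 2) with h' | h'
      · apply combo_mem (1 - p 0 - p 1) (p 0) (p 1 - p 2 - p 3) 0 0 (p 3) (p 2) 0 <;> linarith
      · apply combo_mem (1 - p 0 - p 2 - (p 1 - p 2) - (p 3 - (p 1 - p 2)) / 2) (p 0) 0 0 0
          (p 1 - p 2) (p 2) ((p 3 - (p 1 - p 2)) / 2) <;> linarith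

theorem slice {n : ℕ} {S : Set (Fin (n + 1) → ℝ)} (hS : MeasurableSet S) :
    volume S = ∫⁻ x : ℝ, volume {y : Fin n → ℝ | (Fin.cons x y : Fin (n + 1) → ℝ) ∈ S} := by
  have h := (volume_preserving_piFinSuccAbove (fun _ : Fin (n + 1) => ℝ) 0).symm
  rw [← h.measure_preimage hS.nullMeasurableSet, Measure.volume_eq_prod,
    Measure.prod_apply (h.measurable hS)]
  refine lintegral_congr fun x => ?_
  congr 1
  ext y
  simp [MeasurableEquiv.piFinSuccAbove, Fin.insertNthEquiv]

theorem slice_one {S : Set (Fin 1 → ℝ)} (hS : MeasurableSet S) :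
    volume S = volume {x : ℝ | (fun _ => x) ∈ S} := by
  have h := (volume_preserving_funUnique (Fin 1) ℝ).symm
  convert (h.measure_preimage hS.nullMeasurableSet).symm using 1
  · congr!
  · rfl

theorem HM4_meas : MeasurableSet HM4 := by
  apply IsClosed.measurableSet
  unfold HM4
  simp only [Set.ofPred_and]
  repeat' apply IsClosed.inter
  all_goals exact isClosed_le (by fun_prop) (by fun_prop)

theorem cons_meas {n : ℕ} {S : Set (Fin (n + 1) → ℝ)} (hS : MeasurableSet S) (x : ℝ) :
    MeasurableSet {y : Fin n → ℝ | (Fin.cons x y : Fin (n + 1) → ℝ) ∈ S} := by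
  have : Measurable (fun y : Fin n → ℝ => (Fin.cons x y : Fin (n + 1) → ℝ)) := by
    rw [measurable_pi_iff]
    intro i
    refine Fin.cases ?_ (fun j => ?_) i
    · simp
    · simpa using measurable_pi_apply j
  exact this hS

theorem lint (s : ℝ) (F : ℝ → ENNReal) (g : ℝ → ℝ) (hg : Continuous g) (hs : 0 ≤ s)
    (h0 : ∀ x, 0 ≤ x → x ≤ s → 0 ≤ g x)
    (hF : ∀ x, 0 ≤ x → x ≤ s → F x = ENNReal.ofReal (g x))
    (hF' : ∀ x, ¬ (0 ≤ x ∧ x ≤ s) → F x = 0) :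
    ∫⁻ x, F x = ENNReal.ofReal (∫ x in (0:ℝ)..s, g x) := by
  have : F = (Set.Icc 0 s).indicator (fun x => ENNReal.ofReal (g x)) := by
    ext x
    by_cases hx : 0 ≤ x ∧ x ≤ s
    · rw [Set.indicator_of_mem (show x ∈ Set.Icc 0 s from hx), hF x hx.1 hx.2]
    · rw [Set.indicator_of_notMem (show x ∉ Set.Icc 0 s from hx), hF' x hx]
  rw [this, lintegral_indicator measurableSet_Icc, intervalIntegral.integral_of_le hs,
    ← integral_Icc_eq_integral_Ioc, ofReal_integral_eq_lintegral_ofReal]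
  · exact hg.continuousOn.integrableOn_Icc
  · exact (ae_restrict_iff' measurableSet_Icc).2 (Filter.Eventually.of_forall
      fun x hx => h0 x hx.1 hx.2)

theorem vol_d (a b c : ℝ) : volume {d : ℝ | ![a, b, c, d] ∈ HM4} =
    if 0 ≤ a ∧ (0 ≤ b ∧ b ≤ 1 - a) ∧ (0 ≤ c ∧ c ≤ 1 - a) then
      ENNReal.ofReal (2 * (1 - a) - c - max b c) else 0 := by
  split_ifs with h
  · obtain ⟨h1, ⟨h2, h3⟩, h4, h5⟩ := h
    have : {d : ℝ | ![a, b, c, d] ∈ HM4} = Set.Icc 0 (2 * (1 - a) - c - max b c) := by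
      ext d
      simp only [HM4, Set.mem_ofPred_eq, Set.mem_Icc]
      simp
      constructor
      · rintro ⟨_, _, _, h, _, h', h''⟩
        refine ⟨h, ?_⟩
        rcases max_cases b c with ⟨e, _⟩ | ⟨e, _⟩ <;> rw [e] <;> linarith
      · rintro ⟨h, h'⟩
        have := le_max_left b c
        have := le_max_right b c
        refine ⟨?_, ?_, ?_, ?_, ?_, ?_, ?_⟩ <;> linarith
    rw [this, Real.volume_Icc, sub_zero]
  · convert measure_empty (μ := (volume : Measure ℝ))
    ext d
    simp only [HM4, Set.mem_ofPred_eq, Set.mem_empty_iff_false, iff_false]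
    simp
    intro h1 h2 h3 h4 h5 h6
    exfalso
    apply h
    refine ⟨?_, ⟨?_, ?_⟩, ?_, ?_⟩ <;> linarith

theorem int_c (s b : ℝ) (h0 : 0 ≤ b) (hb : b ≤ s) :
    ∫ c in (0:ℝ)..s, (2 * s - c - max b c) = s ^ 2 - b ^ 2 / 2 := by
  have hc : Continuous fun c : ℝ => 2 * s - c - max b c := by fun_prop
  rw [← intervalIntegral.integral_add_adjacent_intervals (hc.intervalIntegrable 0 b)
    (hc.intervalIntegrable b s)]
  have e1 : ∫ c in (0:ℝ)..b, (2 * s - c - max b c) = ∫ c in (0:ℝ)..b, ((2 * s - b) - c) := by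
    apply intervalIntegral.integral_congr
    intro x hx
    rw [Set.uIcc_of_le h0] at hx
    simp only [max_eq_left hx.2]
    ring
  have e2 : ∫ c in b..s, (2 * s - c - max b c) = ∫ c in b..s, (2 * s - 2 * c) := by
    apply intervalIntegral.integral_congr
    intro x hx
    rw [Set.uIcc_of_le hb] at hx
    simp only [max_eq_right hx.1]
    ring
  have e3 : ∫ c in (0:ℝ)..b, ((2 * s - b) - c) = (2 * s - b) * b - b ^ 2 / 2 := by
    rw [intervalIntegral.integral_sub (by simp) (Continuous.intervalIntegrable (by fun_prop) _ _)]
    simp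
    ring
  have e4 : ∫ c in b..s, (2 * s - 2 * c) = 2 * s * (s - b) - (s ^ 2 - b ^ 2) := by
    rw [intervalIntegral.integral_sub (by simp) (Continuous.intervalIntegrable (by fun_prop) _ _),
      intervalIntegral.integral_const_mul, intervalIntegral.integral_const_mul, integral_id,
      intervalIntegral.integral_const, smul_eq_mul]
    ring
  rw [e1, e2, e3, e4]
  ring

theorem volume_DeltaM4 : volume DeltaM4 = ENNReal.ofReal (5 / 24) := by
  rw [Delta_eq, slice HM4_meas]
  have hstep : ∀ a : ℝ, volume {y : Fin 3 → ℝ | (Fin.cons a y : Fin 4 → ℝ) ∈ HM4} =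
      ∫⁻ b : ℝ, ∫⁻ c : ℝ, volume {d : ℝ | ![a, b, c, d] ∈ HM4} := by
    intro a
    have m1 := cons_meas HM4_meas a
    rw [slice m1]
    congr 1; ext b
    have m2 := cons_meas m1 b
    rw [slice m2]
    congr 1; ext c
    rw [slice_one (cons_meas m2 c)]
    congr 1
  simp only [hstep, vol_d]
  have hc : ∀ a b : ℝ, (∫⁻ c : ℝ, if 0 ≤ a ∧ (0 ≤ b ∧ b ≤ 1 - a) ∧ (0 ≤ c ∧ c ≤ 1 - a) then
      ENNReal.ofReal (2 * (1 - a) - c - max b c) else 0) =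
      if 0 ≤ a ∧ (0 ≤ b ∧ b ≤ 1 - a) then ENNReal.ofReal ((1 - a) ^ 2 - b ^ 2 / 2) else 0 := by
    intro a b
    split_ifs with h
    · obtain ⟨h1, h2, h3⟩ := h
      rw [← int_c (1 - a) b h2 h3]
      apply lint
      · fun_prop
      · linarith
      · intro x hx hx'
        rcases max_cases b x with ⟨e, _⟩ | ⟨e, _⟩ <;> rw [e] <;> linarith
      · intro x hx hx'
        rw [if_pos ⟨h1, ⟨h2, h3⟩, hx, hx'⟩]
      · intro x hx
        rw [if_neg (by tauto)]
    · refine (lintegral_congr fun c => ?_).trans lintegral_zero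
      rw [if_neg (by tauto)]
  simp only [hc]
  have hb : ∀ a : ℝ, (∫⁻ b : ℝ, if 0 ≤ a ∧ (0 ≤ b ∧ b ≤ 1 - a) then
      ENNReal.ofReal ((1 - a) ^ 2 - b ^ 2 / 2) else 0) =
      if 0 ≤ a ∧ a ≤ 1 then ENNReal.ofReal (5 / 6 * (1 - a) ^ 3) else 0 := by
    intro a
    split_ifs with h
    · have e : 5 / 6 * (1 - a) ^ 3 = ∫ b in (0:ℝ)..(1 - a), ((1 - a) ^ 2 - b ^ 2 / 2) := by
        rw [intervalIntegral.integral_sub (by simp) (Continuous.intervalIntegrable (by fun_prop) _ _)]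
        simp
        ring
      rw [e]
      apply lint
      · fun_prop
      · linarith
      · intro x hx hx'
        nlinarith
      · intro x hx hx'
        rw [if_pos ⟨h.1, hx, hx'⟩]
      · intro x hx
        rw [if_neg (by tauto)]
    · refine (lintegral_congr fun c => ?_).trans lintegral_zero
      rw [if_neg]
      rintro ⟨h1, h2, h3⟩
      exact h ⟨h1, by linarith⟩
  simp only [hb]
  have e : (5 / 24 : ℝ) = ∫ a in (0:ℝ)..1, 5 / 6 * (1 - a) ^ 3 := by
    rw [intervalIntegral.integral_const_mul,
      intervalIntegral.integral_comp_sub_left (fun x : ℝ => x ^ 3) 1]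
    simp
    norm_num
  rw [e]
  apply lint
  · fun_prop
  · norm_num
  · intro x hx hx'
    have : 0 ≤ 1 - x := by linarith
    positivity
  · intro x hx hx'
    rw [if_pos ⟨hx, hx'⟩]
  · intro x hx
    rw [if_neg hx]
end

section
/- The integral of the linear function (w,x,y,z) ↦ 3w + 4x + y + 2z over the convex hull Δ in ℝ⁴ of the eight points (0,0,0,0), (1,0,0,0), (0,1,0,0), (0,0,1,0), (0,0,0,1), (0,1,0,1), (0,1,1,0), (0,0,0,2), with respect to 4-dimensional Lebesgue measure, equals 2/3. -/
open MeasureTheory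

lemma hull_eq : DeltaM4 = {p : Fin 4 → ℝ | (0 ≤ p 0 ∧ p 0 ≤ 1) ∧ (0 ≤ p 1 ∧ p 1 ≤ 1 - p 0) ∧
    (0 ≤ p 2 ∧ p 2 ≤ 1 - p 0) ∧
    (0 ≤ p 3 ∧ p 3 ≤ 2 * (1 - p 0) - p 1 - p 2 ∧ p 3 ≤ 2 * (1 - p 0) - 2 * p 2)} := by
  apply Set.Subset.antisymm
  · apply convexHull_min
    · intro p hp
      simp only [Set.mem_insert_iff, Set.mem_singleton_iff] at hp
      rcases hp with h | h | h | h | h | h | h | h <;> subst h <;>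
        simp [Matrix.cons_val] <;> norm_num
    · intro p hp q hq a b ha hb hab
      obtain rfl : a = 1 - b := by linarith
      simp only [Set.mem_ofPred_eq, Pi.add_apply, Pi.smul_apply, smul_eq_mul] at *
      obtain ⟨⟨h1, h2⟩, ⟨h3, h4⟩, ⟨h5, h6⟩, h7, h8, h9⟩ := hp
      obtain ⟨⟨k1, k2⟩, ⟨k3, k4⟩, ⟨k5, k6⟩, k7, k8, k9⟩ := hq
      refine ⟨⟨?_, ?_⟩, ⟨?_, ?_⟩, ⟨?_, ?_⟩, ?_, ?_, ?_⟩
      · linarith [mul_le_mul_of_nonneg_left h1 ha, mul_le_mul_of_nonneg_left k1 hb]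
      · linarith [mul_le_mul_of_nonneg_left h2 ha, mul_le_mul_of_nonneg_left k2 hb]
      · linarith [mul_le_mul_of_nonneg_left h3 ha, mul_le_mul_of_nonneg_left k3 hb]
      · linarith [mul_le_mul_of_nonneg_left h4 ha, mul_le_mul_of_nonneg_left k4 hb]
      · linarith [mul_le_mul_of_nonneg_left h5 ha, mul_le_mul_of_nonneg_left k5 hb]
      · linarith [mul_le_mul_of_nonneg_left h6 ha, mul_le_mul_of_nonneg_left k6 hb]
      · linarith [mul_le_mul_of_nonneg_left h7 ha, mul_le_mul_of_nonneg_left k7 hb]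
      · linarith [mul_le_mul_of_nonneg_left h8 ha, mul_le_mul_of_nonneg_left k8 hb]
      · linarith [mul_le_mul_of_nonneg_left h9 ha, mul_le_mul_of_nonneg_left k9 hb]
  · rintro p ⟨⟨h1, h2⟩, ⟨h3, h4⟩, ⟨h5, h6⟩, h7, h8, h9⟩
    have key : ∀ o a b c d e f : ℝ, 0 ≤ o → 0 ≤ a → 0 ≤ b → 0 ≤ c → 0 ≤ d → 0 ≤ e → 0 ≤ f →
        o + p 0 + a + b + c + d + e + f = 1 → p 1 = a + d + e → p 2 = b + e →
        p 3 = c + d + 2 * f → p ∈ DeltaM4 := by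
      intro o a b c d e f ho ha hb hc hd he hf hs e1 e2 e3
      have := (convex_convexHull ℝ ({![0,0,0,0], ![1,0,0,0], ![0,1,0,0], ![0,0,1,0],
        ![0,0,0,1], ![0,1,0,1], ![0,1,1,0], ![0,0,0,2]} : Set (Fin 4 → ℝ))).sum_mem
        (t := Finset.univ) (w := ![o, p 0, a, b, c, d, e, f])
        (z := ![![0,0,0,0], ![1,0,0,0], ![0,1,0,0], ![0,0,1,0],
        ![0,0,0,1], ![0,1,0,1], ![0,1,1,0], ![0,0,0,2]])
        (by intro i _; fin_cases i <;> simp <;> assumption)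
        (by simp [Fin.sum_univ_succ]; linarith)
        (by intro i _; apply subset_convexHull; fin_cases i <;> simp)
      unfold DeltaM4
      convert this using 1
      ext i
      fin_cases i <;> simp [Fin.sum_univ_succ] <;> linarith
    rcases le_total (p 1) (p 2) with h | h
    · apply key (1 - p 0 - p 2 - p 3 / 2) 0 (p 2 - p 1) 0 0 (p 1) (p 3 / 2) <;> linarith
    · rcases le_total (p 3) (p 1 - p 2) with h' | h'
      · apply key (1 - p 0 - p 1) (p 1 - p 2 - p 3) 0 0 (p 3) (p 2) 0 <;> linarith
      · apply key (1 - p 0 - p 1 - (p 3 - (p 1 - p 2)) / 2) 0 0 0 (p 1 - p 2) (p 2)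
          ((p 3 - (p 1 - p 2)) / 2) <;> linarith

lemma slice_s1 {β : Type*} [MeasureSpace β] [SFinite (volume : Measure β)] (a b : ℝ) (hab : a ≤ b)
    (T : ℝ → Set β) (f : ℝ × β → ℝ)
    (hS : MeasurableSet {q : ℝ × β | (a ≤ q.1 ∧ q.1 ≤ b) ∧ q.2 ∈ T q.1})
    (hf : IntegrableOn f {q : ℝ × β | (a ≤ q.1 ∧ q.1 ≤ b) ∧ q.2 ∈ T q.1}) :
    ∫ q in {q : ℝ × β | (a ≤ q.1 ∧ q.1 ≤ b) ∧ q.2 ∈ T q.1}, f q =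
      ∫ x in a..b, ∫ y in T x, f (x, y) := by
  rw [← integral_indicator hS, Measure.volume_eq_prod, integral_prod]
  · rw [intervalIntegral.integral_of_le hab, ← integral_Icc_eq_integral_Ioc,
      ← integral_indicator measurableSet_Icc]
    congr 1
    ext x
    by_cases hx : x ∈ Set.Icc a b
    · have hT : MeasurableSet (T x) := by
        have := measurable_prodMk_left (x := x) hS
        convert this using 1
        ext y
        simp [hx.1, hx.2]
      rw [Set.indicator_of_mem hx, ← integral_indicator hT]
      congr 1
      ext y
      have hx' : a ≤ x ∧ x ≤ b := hx
      by_cases hy : y ∈ T x <;> simp [Set.indicator, hx'.1, hx'.2, hy]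
    · rw [Set.indicator_of_notMem hx]
      have : ∀ y, ({q : ℝ × β | (a ≤ q.1 ∧ q.1 ≤ b) ∧ q.2 ∈ T q.1}).indicator f (x, y) = 0 := by
        intro y
        apply Set.indicator_of_notMem
        intro h
        exact hx h.1
      simp [this]
  · rw [← Measure.volume_eq_prod]
    exact hf.integrable_indicator hS

def T3 (w x y : ℝ) : Set ℝ :=
  {z | 0 ≤ z ∧ z ≤ 2 * (1 - w) - x - y ∧ z ≤ 2 * (1 - w) - 2 * y}
def T2 (w x : ℝ) : Set (ℝ × ℝ) := {q | (0 ≤ q.1 ∧ q.1 ≤ 1 - w) ∧ q.2 ∈ T3 w x q.1}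
def T1 (w : ℝ) : Set (ℝ × ℝ × ℝ) := {q | (0 ≤ q.1 ∧ q.1 ≤ 1 - w) ∧ q.2 ∈ T2 w q.1}
def T0 : Set (ℝ × ℝ × ℝ × ℝ) := {q | (0 ≤ q.1 ∧ q.1 ≤ 1) ∧ q.2 ∈ T1 q.1}

lemma cT2 (w x : ℝ) : IsCompact (T2 w x) := by
  refine (isCompact_Icc (a := ((0, 0) : ℝ × ℝ)) (b := (1 - w, 2 * (1 - w)))).of_isClosed_subset ?_ ?_
  · simp only [T2, T3, Set.ofPred_and]
    repeat' apply IsClosed.inter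
    all_goals exact isClosed_le (by fun_prop) (by fun_prop)
  · rintro ⟨y, z⟩ ⟨⟨h1, h2⟩, h3, h4, h5⟩
    simp only at *
    exact ⟨⟨h1, h3⟩, ⟨h2, by simp only; linarith⟩⟩

lemma cT1 (w : ℝ) : IsCompact (T1 w) := by
  refine (isCompact_Icc (a := ((0, 0, 0) : ℝ × ℝ × ℝ))
    (b := (1 - w, 1 - w, 2 * (1 - w)))).of_isClosed_subset ?_ ?_
  · simp only [T1, T2, T3, Set.ofPred_and]
    repeat' apply IsClosed.inter
    all_goals exact isClosed_le (by fun_prop) (by fun_prop)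
  · rintro ⟨x, y, z⟩ ⟨⟨h1, h2⟩, ⟨h6, h7⟩, h3, h4, h5⟩
    simp only at *
    exact ⟨⟨h1, h6, h3⟩, ⟨h2, h7, by simp only; linarith⟩⟩

lemma cT0 : IsCompact T0 := by
  refine (isCompact_Icc (a := ((0, 0, 0, 0) : ℝ × ℝ × ℝ × ℝ))
    (b := (1, 1, 1, 2))).of_isClosed_subset ?_ ?_
  · simp only [T0, T1, T2, T3, Set.ofPred_and]
    repeat' apply IsClosed.inter
    all_goals exact isClosed_le (by fun_prop) (by fun_prop)
  · rintro ⟨w, x, y, z⟩ ⟨⟨h8, h9⟩, ⟨h1, h2⟩, ⟨h6, h7⟩, h3, h4, h5⟩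
    simp only at *
    exact ⟨⟨h8, h1, h6, h3⟩, ⟨h9, by simp only; linarith, by simp only; linarith,
      by simp only; linarith⟩⟩

lemma ftc (F f : ℝ → ℝ) (a b v : ℝ) (h : ∀ x, HasDerivAt F (f x) x) (hf : Continuous f)
    (hv : F b - F a = v) : ∫ x in a..b, f x = v := by
  rw [intervalIntegral.integral_eq_sub_of_hasDerivAt (fun x _ => h x) (hf.intervalIntegrable _ _), hv]

/-- Integration of cubic polynomials. -/
lemma cubic (c0 c1 c2 c3 c4 a b : ℝ) :
    ∫ x in a..b, (c0 + c1 * x + c2 * x ^ 2 + c3 * x ^ 3 + c4 * x ^ 4) =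
    c0 * (b - a) + c1 * (b ^ 2 - a ^ 2) / 2 + c2 * (b ^ 3 - a ^ 3) / 3 +
      c3 * (b ^ 4 - a ^ 4) / 4 + c4 * (b ^ 5 - a ^ 5) / 5 := by
  apply ftc (fun x => c0 * x + c1 * x ^ 2 / 2 + c2 * x ^ 3 / 3 + c3 * x ^ 4 / 4 + c4 * x ^ 5 / 5)
  · intro x
    have := (((((hasDerivAt_id x).const_mul c0).add
      (((hasDerivAt_pow 2 x).const_mul c1).div_const 2)).add
      (((hasDerivAt_pow 3 x).const_mul c2).div_const 3)).add
      (((hasDerivAt_pow 4 x).const_mul c3).div_const 4)).add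
      (((hasDerivAt_pow 5 x).const_mul c4).div_const 5)
    refine HasDerivAt.congr_deriv this ?_
    norm_num
    ring
  · fun_prop
  · ring

lemma int3 (w x y h : ℝ) (hh : 0 ≤ h) (hT : T3 w x y = Set.Icc 0 h) :
    ∫ z in T3 w x y, (3 * w + 4 * x + y + 2 * z) = (3 * w + 4 * x + y) * h + h ^ 2 := by
  rw [hT, integral_Icc_eq_integral_Ioc, ← intervalIntegral.integral_of_le hh]
  have := cubic (3 * w + 4 * x + y) 2 0 0 0 0 h
  simp only [zero_mul, add_zero] at this
  rw [this]; ring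

lemma int2 (w x : ℝ) (hx : 0 ≤ x) (hxw : x ≤ 1 - w) :
    ∫ q in T2 w x, (3 * w + 4 * x + q.1 + 2 * q.2) =
      (∫ y in (0:ℝ)..x, ((3 * w + 4 * x + y) * (2 * (1 - w) - x - y) + (2 * (1 - w) - x - y) ^ 2)) +
      ∫ y in x..(1 - w), ((3 * w + 4 * x + y) * (2 * (1 - w) - 2 * y)
        + (2 * (1 - w) - 2 * y) ^ 2) := by
  have e1 : ∀ y ∈ Set.uIcc 0 x, ∫ z in T3 w x y, (3 * w + 4 * x + y + 2 * z) =
      (3 * w + 4 * x + y) * (2 * (1 - w) - x - y) + (2 * (1 - w) - x - y) ^ 2 := by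
    intro y hy
    rw [Set.uIcc_of_le hx] at hy
    apply int3
    · linarith [hy.2]
    · ext z
      simp only [T3, Set.mem_ofPred_eq, Set.mem_Icc]
      exact ⟨fun h => ⟨h.1, h.2.1⟩, fun h => ⟨h.1, h.2, by linarith [hy.2, h.2]⟩⟩
  have e2 : ∀ y ∈ Set.uIcc x (1 - w), ∫ z in T3 w x y, (3 * w + 4 * x + y + 2 * z) =
      (3 * w + 4 * x + y) * (2 * (1 - w) - 2 * y) + (2 * (1 - w) - 2 * y) ^ 2 := by
    intro y hy
    rw [Set.uIcc_of_le hxw] at hy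
    apply int3
    · linarith [hy.2]
    · ext z
      simp only [T3, Set.mem_ofPred_eq, Set.mem_Icc]
      exact ⟨fun h => ⟨h.1, h.2.2⟩, fun h => ⟨h.1, by linarith [hy.1, h.2], h.2⟩⟩
  have := slice_s1 0 (1 - w) (hx.trans hxw) (T3 w x) (fun q => 3 * w + 4 * x + q.1 + 2 * q.2)
    (cT2 w x).measurableSet ((by fun_prop : Continuous _).continuousOn.integrableOn_compact (cT2 w x))
  refine this.trans ?_
  simp only
  rw [← intervalIntegral.integral_congr e1, ← intervalIntegral.integral_congr e2,
    intervalIntegral.integral_add_adjacent_intervals]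
  · refine ((intervalIntegrable_congr ?_).mpr ((by fun_prop : Continuous (fun y : ℝ => (3 * w + 4 * x + y) * (2 * (1 - w) - x - y) + (2 * (1 - w) - x - y) ^ 2)).intervalIntegrable 0 x))
    intro y hy; exact e1 y (Set.uIoc_subset_uIcc hy)
  · refine ((intervalIntegrable_congr ?_).mpr ((by fun_prop : Continuous (fun y : ℝ => (3 * w + 4 * x + y) * (2 * (1 - w) - 2 * y) + (2 * (1 - w) - 2 * y) ^ 2)).intervalIntegrable x (1 - w)))
    intro y hy; exact e2 y (Set.uIoc_subset_uIcc hy)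


lemma int2' (w x : ℝ) (hx : 0 ≤ x) (hxw : x ≤ 1 - w) :
    ∫ q in T2 w x, (3 * w + 4 * x + q.1 + 2 * q.2) =
      (3 * (1 - w) ^ 2 - 4 / 3 * (1 - w) ^ 3) + 4 * (1 - w) ^ 2 * x
        + (-(1 - w) / 2 - 3 / 2) * x ^ 2 + (-7 / 6) * x ^ 3 + 0 * x ^ 4 := by
  rw [int2 w x hx hxw]
  have h1 := cubic ((3 * w + 4 * x + 2 * (1 - w) - x) * (2 * (1 - w) - x))
    (-(3 * w + 4 * x + 2 * (1 - w) - x)) 0 0 0 0 x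
  have h2 := cubic (2 * (1 - w) * (3 * w + 4 * x + 2 * (1 - w)))
    (-(6 * (1 - w) + 2 * (3 * w + 4 * x))) 2 0 0 x (1 - w)
  have g1 : ∀ y : ℝ, (3 * w + 4 * x + y) * (2 * (1 - w) - x - y) + (2 * (1 - w) - x - y) ^ 2 =
    (3 * w + 4 * x + 2 * (1 - w) - x) * (2 * (1 - w) - x) +
    (-(3 * w + 4 * x + 2 * (1 - w) - x)) * y + 0 * y ^ 2 + 0 * y ^ 3 + 0 * y ^ 4 := by
    intro y; ring
  have g2 : ∀ y : ℝ, (3 * w + 4 * x + y) * (2 * (1 - w) - 2 * y) + (2 * (1 - w) - 2 * y) ^ 2 =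
    2 * (1 - w) * (3 * w + 4 * x + 2 * (1 - w)) +
    (-(6 * (1 - w) + 2 * (3 * w + 4 * x))) * y + 2 * y ^ 2 + 0 * y ^ 3 + 0 * y ^ 4 := by
    intro y; ring
  simp_rw [g1, g2]
  rw [h1, h2]
  ring

lemma int1 (w : ℝ) (hw : w ≤ 1) :
    ∫ q in T1 w, (3 * w + 4 * q.1 + q.2.1 + 2 * q.2.2) =
      (5 / 2 + 5 / 24) + (-15 / 2 - 20 / 24) * w + (15 / 2 + 30 / 24) * w ^ 2
        + (-5 / 2 - 20 / 24) * w ^ 3 + 5 / 24 * w ^ 4 := by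
  have h0 : 0 ≤ 1 - w := by linarith
  have := slice_s1 0 (1 - w) h0 (T2 w) (fun q => 3 * w + 4 * q.1 + q.2.1 + 2 * q.2.2)
    (cT1 w).measurableSet ((by fun_prop : Continuous _).continuousOn.integrableOn_compact (cT1 w))
  refine this.trans ?_
  simp only
  rw [intervalIntegral.integral_congr (g := fun x => (3 * (1 - w) ^ 2 - 4 / 3 * (1 - w) ^ 3)
    + 4 * (1 - w) ^ 2 * x + (-(1 - w) / 2 - 3 / 2) * x ^ 2 + (-7 / 6) * x ^ 3 + 0 * x ^ 4), cubic]
  · ring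
  · intro x hx
    rw [Set.uIcc_of_le h0] at hx
    exact int2' w x hx.1 hx.2

lemma int0 : ∫ q in T0, (3 * q.1 + 4 * q.2.1 + q.2.2.1 + 2 * q.2.2.2) = 2 / 3 := by
  have := slice_s1 0 1 zero_le_one T1 (fun q => 3 * q.1 + 4 * q.2.1 + q.2.2.1 + 2 * q.2.2.2)
    cT0.measurableSet ((by fun_prop : Continuous _).continuousOn.integrableOn_compact cT0)
  refine this.trans ?_
  simp only
  rw [intervalIntegral.integral_congr (g := fun w => (5 / 2 + 5 / 24) + (-15 / 2 - 20 / 24) * w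
    + (15 / 2 + 30 / 24) * w ^ 2 + (-5 / 2 - 20 / 24) * w ^ 3 + 5 / 24 * w ^ 4), cubic]
  · norm_num
  · intro x hx
    rw [Set.uIcc_of_le zero_le_one] at hx
    exact int1 x hx.2

lemma exists_equiv : ∃ e : (Fin 4 → ℝ) ≃ᵐ ℝ × ℝ × ℝ × ℝ, MeasurePreserving e ∧
    ∀ p, e p = (p 0, p 1, p 2, p 3) := by
  have a4 := volume_preserving_piFinSuccAbove (fun _ : Fin 4 => ℝ) 0
  have a3 := volume_preserving_piFinSuccAbove (fun _ : Fin 3 => ℝ) 0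
  have a2 := volume_preserving_piFinTwo (fun _ : Fin 2 => ℝ)
  refine ⟨(MeasurableEquiv.piFinSuccAbove (fun _ : Fin 4 => ℝ) 0).trans
    ((MeasurableEquiv.refl ℝ).prodCongr
      ((MeasurableEquiv.piFinSuccAbove (fun _ : Fin 3 => ℝ) 0).trans
        ((MeasurableEquiv.refl ℝ).prodCongr (MeasurableEquiv.piFinTwo (fun _ : Fin 2 => ℝ))))),
    ?_, ?_⟩
  · have b3 := ((MeasurePreserving.id (volume : Measure ℝ)).prod a2).comp a3
    exact ((MeasurePreserving.id (volume : Measure ℝ)).prod b3).comp a4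
  · intro p
    rfl

/-- The integral over Δ of the G-function `G_ζ(w,x,y,z) = 3w + 4x + y + 2z` equals `2/3`. -/
theorem integral_Gzeta_DeltaM4 :
    ∫ p in DeltaM4, (3 * p 0 + 4 * p 1 + p 2 + 2 * p 3) = 2 / 3 := by
  obtain ⟨e, he, hp⟩ := exists_equiv
  have hs : DeltaM4 = e ⁻¹' T0 := by
    rw [hull_eq]
    ext p
    simp only [Set.mem_preimage, hp]
    rfl
  have := he.setIntegral_preimage_emb e.measurableEmbedding
    (fun q => 3 * q.1 + 4 * q.2.1 + q.2.2.1 + 2 * q.2.2.2) T0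
  rw [int0, ← hs] at this
  simpa only [hp] using this
end

section
/- The integral of the linear function (w,x,y,z) ↦ 10 − 5(w + x + y + z) over the convex hull Δ in ℝ⁴ of the eight points (0,0,0,0), (1,0,0,0), (0,1,0,0), (0,0,1,0), (0,0,0,1), (0,1,0,1), (0,1,1,0), (0,0,0,2), with respect to 4-dimensional Lebesgue measure, equals 3/4 (equivalently, ∫_Δ (w+x+y+z) = 4/15). -/
open MeasureTheory

namespace DM4

def K : Set (Fin 4 → ℝ) :=
  {p | 0 ≤ p 0 ∧ 0 ≤ p 1 ∧ 0 ≤ p 2 ∧ 0 ≤ p 3 ∧ p 0 + p 1 ≤ 1 ∧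
    2 * p 2 + p 3 ≤ 2 * (1 - p 0) ∧ p 1 + p 2 + p 3 ≤ 2 * (1 - p 0)}

lemma mem_of_weights (v : Fin 8 → (Fin 4 → ℝ)) (S : Set (Fin 4 → ℝ)) (hv : ∀ i, v i ∈ S)
    (a : Fin 8 → ℝ) (ha : ∀ i, 0 ≤ a i) (h1 : ∑ i, a i = 1) :
    ∑ i, a i • v i ∈ convexHull ℝ S :=
  (convex_convexHull ℝ S).sum_mem (fun i _ => ha i) h1
    (fun i _ => subset_convexHull ℝ S (hv i))

lemma mem_delta (p : Fin 4 → ℝ) (a b c d e f g h : ℝ) (ha : 0 ≤ a) (hb : 0 ≤ b) (hc : 0 ≤ c)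
    (hd : 0 ≤ d) (he : 0 ≤ e) (hf : 0 ≤ f) (hg : 0 ≤ g) (hh : 0 ≤ h)
    (h1 : a + b + c + d + e + f + g + h = 1)
    (h0 : p 0 = b) (hx : p 1 = c + f + g) (hy : p 2 = d + g) (hz : p 3 = e + f + 2 * h) :
    p ∈ DeltaM4 := by
  have := mem_of_weights ![![0,0,0,0], ![1,0,0,0], ![0,1,0,0], ![0,0,1,0],
      ![0,0,0,1], ![0,1,0,1], ![0,1,1,0], ![0,0,0,2]]
      ({![0,0,0,0], ![1,0,0,0], ![0,1,0,0], ![0,0,1,0],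
      ![0,0,0,1], ![0,1,0,1], ![0,1,1,0], ![0,0,0,2]} : Set (Fin 4 → ℝ))
      (by intro i; fin_cases i <;> simp)
      ![a, b, c, d, e, f, g, h] (by intro i; fin_cases i <;> simpa)
      (by simp [Fin.sum_univ_eight]; linarith)
  rw [DeltaM4]
  convert this using 1
  ext i
  fin_cases i <;> simp [Fin.sum_univ_eight, h0, hx, hy, hz] <;> ring

lemma delta_eq : DeltaM4 = K := by
  apply Set.Subset.antisymm
  · apply convexHull_min
    · intro p hp
      simp only [Set.mem_insert_iff, Set.mem_singleton_iff] at hp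
      rcases hp with rfl | rfl | rfl | rfl | rfl | rfl | rfl | rfl <;> simp [K] <;> norm_num
    · rintro p ⟨h1, h2, h3, h4, h5, h6, h7⟩ q ⟨k1, k2, k3, k4, k5, k6, k7⟩ a b ha hb hab
      obtain rfl : a = 1 - b := by linarith
      simp only [K, Set.mem_ofPred_eq, Pi.add_apply, Pi.smul_apply, smul_eq_mul]
      refine ⟨by positivity, by positivity, by positivity, by positivity, ?_, ?_, ?_⟩
      · linarith [mul_le_mul_of_nonneg_left h5 ha, mul_le_mul_of_nonneg_left k5 hb]
      · linarith [mul_le_mul_of_nonneg_left h6 ha, mul_le_mul_of_nonneg_left k6 hb]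
      · linarith [mul_le_mul_of_nonneg_left h7 ha, mul_le_mul_of_nonneg_left k7 hb]
  · rintro p ⟨h1, h2, h3, h4, h5, h6, h7⟩
    rcases le_total (p 1) (p 2) with h | h
    · apply mem_delta p (1 - p 0 - p 2 - p 3 / 2) (p 0) 0 (p 2 - p 1) 0 0 (p 1) (p 3 / 2) <;>
        linarith
    · rcases le_total (p 3) (p 1 - p 2) with k | k
      · apply mem_delta p (1 - p 0 - p 1) (p 0) (p 1 - p 2 - p 3) 0 0 (p 3) (p 2) 0 <;>
          linarith
      · apply mem_delta p ((2 * (1 - p 0) - p 1 - p 2 - p 3) / 2) (p 0) 0 0 0 (p 1 - p 2) (p 2)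
          ((p 3 - p 1 + p 2) / 2) <;> linarith

lemma slice {n : ℕ} (S : Set (Fin (n + 1) → ℝ)) (hS : IsClosed S)
    (hb : S ⊆ Set.Icc 0 (fun _ => 2)) (f : (Fin (n + 1) → ℝ) → ℝ) (hf : Continuous f) :
    ∫ p, S.indicator f p = ∫ a : ℝ, ∫ q : Fin n → ℝ, S.indicator f (Fin.cons a q) := by
  have hc : IsCompact S := isCompact_Icc.of_isClosed_subset hS hb
  have hi : Integrable (S.indicator f) :=
    (integrable_indicator_iff hS.measurableSet).2 (hf.continuousOn.integrableOn_compact hc)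
  have hm := (volume_preserving_piFinSuccAbove (fun _ : Fin (n + 1) => ℝ) 0).symm
  rw [← hm.integral_comp (MeasurableEquiv.measurableEmbedding _)]
  have hi2 := (hm.integrable_comp_emb (MeasurableEquiv.measurableEmbedding _)).2 hi
  have := integral_prod _ hi2
  rw [← Measure.volume_eq_prod] at this
  simpa [MeasurableEquiv.piFinSuccAbove, Fin.insertNthEquiv] using this

lemma slice_ind {n : ℕ} (S : Set (Fin (n + 1) → ℝ)) (hS : IsClosed S)
    (hb : S ⊆ Set.Icc 0 (fun _ => 2)) (f : (Fin (n + 1) → ℝ) → ℝ) (hf : Continuous f) (a : ℝ) :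
    ∃ (T : Set (Fin n → ℝ)) (g : (Fin n → ℝ) → ℝ), IsClosed T ∧ T ⊆ Set.Icc 0 (fun _ => 2) ∧
      Continuous g ∧ ∀ q, S.indicator f (Fin.cons a q) = T.indicator g q := by
  have hcont : Continuous (fun q : Fin n → ℝ => (Fin.cons a q : Fin (n + 1) → ℝ)) := by
    apply continuous_pi
    intro i
    refine Fin.cases ?_ (fun j => ?_) i
    · simpa using continuous_const
    · simpa using continuous_apply j
  refine ⟨(fun q : Fin n → ℝ => (Fin.cons a q : Fin (n + 1) → ℝ)) ⁻¹' S,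
    fun q => f (Fin.cons a q), hS.preimage hcont, ?_, hf.comp hcont, fun q => rfl⟩
  intro q hq
  have h := hb hq
  exact ⟨fun i => by simpa using h.1 i.succ, fun i => by simpa using h.2 i.succ⟩

lemma slice4 (S : Set (Fin 4 → ℝ)) (hS : IsClosed S)
    (hb : S ⊆ Set.Icc 0 (fun _ => 2)) (f : (Fin 4 → ℝ) → ℝ) (hf : Continuous f) :
    ∫ p, S.indicator f p = ∫ w : ℝ, ∫ x : ℝ, ∫ y : ℝ, ∫ z : ℝ, S.indicator f ![w, x, y, z] := by
  rw [slice S hS hb f hf]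
  congr 1; ext w
  obtain ⟨S1, f1, hS1, hb1, hf1, e1⟩ := slice_ind S hS hb f hf w
  simp_rw [e1]
  rw [slice S1 hS1 hb1 f1 hf1]
  congr 1; ext x
  obtain ⟨S2, f2, hS2, hb2, hf2, e2⟩ := slice_ind S1 hS1 hb1 f1 hf1 x
  simp_rw [e2]
  rw [slice S2 hS2 hb2 f2 hf2]
  congr 1; ext y
  obtain ⟨S3, f3, hS3, hb3, hf3, e3⟩ := slice_ind S2 hS2 hb2 f2 hf2 y
  simp_rw [e3]
  rw [slice S3 hS3 hb3 f3 hf3]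
  congr 1; ext z
  have h : ∀ q : Fin 0 → ℝ, S3.indicator f3 (Fin.cons z q) = S.indicator f ![w, x, y, z] := by
    intro q
    rw [← e3, ← e2, ← e1]
    congr 1
    ext i
    fin_cases i <;> rfl
  simp_rw [h]
  rw [integral_const]
  simp [Measure.real, volume_pi, Measure.pi_of_empty]

lemma int_poly (a b c0 c1 c2 c3 c4 : ℝ) :
    ∫ t in a..b, (c0 + c1 * t + c2 * t ^ 2 + c3 * t ^ 3 + c4 * t ^ 4) =
      c0 * (b - a) + c1 * (b ^ 2 - a ^ 2) / 2 + c2 * (b ^ 3 - a ^ 3) / 3 +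
      c3 * (b ^ 4 - a ^ 4) / 4 + c4 * (b ^ 5 - a ^ 5) / 5 := by
  rw [intervalIntegral.integral_eq_sub_of_hasDerivAt (f := fun t => c0 * t + c1 * (t ^ 2 / 2) +
    c2 * (t ^ 3 / 3) + c3 * (t ^ 4 / 4) + c4 * (t ^ 5 / 5))]
  · ring
  · intro t _
    have hp : ∀ n : ℕ, HasDerivAt (fun t : ℝ => t ^ (n + 1) / (n + 1)) (t ^ n) t := by
      intro n
      have := (hasDerivAt_pow (n + 1) t).div_const ((n : ℝ) + 1)
      have hn : ((n : ℝ) + 1) ≠ 0 := by positivity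
      have e : ((n + 1 : ℕ) : ℝ) * t ^ (n + 1 - 1) / ((n : ℝ) + 1) = t ^ n := by
        rw [div_eq_iff hn]
        push_cast
        ring
      rw [e] at this
      exact this
    have h1 := hp 1
    have h2 := hp 2
    have h3 := hp 3
    have h4 := hp 4
    norm_num at h1 h2 h3 h4
    have := (((((hasDerivAt_id t).const_mul c0).add (h1.const_mul c1)).add
      (h2.const_mul c2)).add (h3.const_mul c3)).add (h4.const_mul c4)
    rw [mul_one] at this
    exact this
  · apply Continuous.intervalIntegrable
    fun_prop

lemma int_of_poly (g : ℝ → ℝ) (a b c0 c1 c2 c3 c4 : ℝ) (hab : a ≤ b)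
    (h : ∀ t, a ≤ t → t ≤ b → g t = c0 + c1 * t + c2 * t ^ 2 + c3 * t ^ 3 + c4 * t ^ 4)
    (h0 : ∀ t, ¬ (a ≤ t ∧ t ≤ b) → g t = 0) :
    ∫ t, g t = c0 * (b - a) + c1 * (b ^ 2 - a ^ 2) / 2 + c2 * (b ^ 3 - a ^ 3) / 3 +
      c3 * (b ^ 4 - a ^ 4) / 4 + c4 * (b ^ 5 - a ^ 5) / 5 := by
  rw [← int_poly, intervalIntegral.integral_of_le hab, ← integral_Icc_eq_integral_Ioc,
    ← setIntegral_eq_integral_of_forall_compl_eq_zero (s := Set.Icc a b) (fun t ht => h0 t ht)]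
  exact setIntegral_congr_fun measurableSet_Icc (fun t ht => h t ht.1 ht.2)

lemma int_of_poly2 (g : ℝ → ℝ) (a b e c0 c1 c2 c3 c4 d0 d1 d2 d3 d4 : ℝ) (hab : a ≤ b)
    (hbe : b ≤ e)
    (h : ∀ t, a ≤ t → t ≤ b → g t = c0 + c1 * t + c2 * t ^ 2 + c3 * t ^ 3 + c4 * t ^ 4)
    (h' : ∀ t, b ≤ t → t ≤ e → g t = d0 + d1 * t + d2 * t ^ 2 + d3 * t ^ 3 + d4 * t ^ 4)
    (h0 : ∀ t, ¬ (a ≤ t ∧ t ≤ e) → g t = 0) :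
    ∫ t, g t = c0 * (b - a) + c1 * (b ^ 2 - a ^ 2) / 2 + c2 * (b ^ 3 - a ^ 3) / 3 +
      c3 * (b ^ 4 - a ^ 4) / 4 + c4 * (b ^ 5 - a ^ 5) / 5 + 
      (d0 * (e - b) + d1 * (e ^ 2 - b ^ 2) / 2 + d2 * (e ^ 3 - b ^ 3) / 3 +
      d3 * (e ^ 4 - b ^ 4) / 4 + d4 * (e ^ 5 - b ^ 5) / 5) := by
  have E1 : Set.EqOn (fun t => c0 + c1 * t + c2 * t ^ 2 + c3 * t ^ 3 + c4 * t ^ 4) g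
      (Set.uIcc a b) := by
    rw [Set.uIcc_of_le hab]; exact fun t ht => (h t ht.1 ht.2).symm
  have E2 : Set.EqOn (fun t => d0 + d1 * t + d2 * t ^ 2 + d3 * t ^ 3 + d4 * t ^ 4) g
      (Set.uIcc b e) := by
    rw [Set.uIcc_of_le hbe]; exact fun t ht => (h' t ht.1 ht.2).symm
  have I1 : IntervalIntegrable g volume a b :=
    (Continuous.intervalIntegrable (by fun_prop) a b).congr
      (fun t ht => E1 (Set.uIoc_subset_uIcc ht))
  have I2 : IntervalIntegrable g volume b e :=
    (Continuous.intervalIntegrable (by fun_prop) b e).congr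
      (fun t ht => E2 (Set.uIoc_subset_uIcc ht))
  rw [← int_poly, ← int_poly, intervalIntegral.integral_congr E1,
    intervalIntegral.integral_congr E2, intervalIntegral.integral_add_adjacent_intervals I1 I2,
    intervalIntegral.integral_of_le (hab.trans hbe), ← integral_Icc_eq_integral_Ioc,
    ← setIntegral_eq_integral_of_forall_compl_eq_zero (s := Set.Icc a e) (fun t ht => h0 t ht)]

lemma K_closed : IsClosed K := by
  unfold K
  simp only [Set.ofPred_and]
  repeat' apply IsClosed.inter
  all_goals exact isClosed_le (by fun_prop) (by fun_prop)

lemma K_sub : K ⊆ Set.Icc 0 (fun _ => 2) := by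
  rintro p ⟨h1, h2, h3, h4, h5, h6, h7⟩
  constructor <;> intro i <;> fin_cases i <;> simp <;> linarith

noncomputable def G (c d w x y z : ℝ) : ℝ :=
  K.indicator (fun p => c + d * (p 0 + p 1 + p 2 + p 3)) ![w, x, y, z]

lemma G_pos (c d w x y z : ℝ) (h : 0 ≤ w ∧ 0 ≤ x ∧ 0 ≤ y ∧ 0 ≤ z ∧ w + x ≤ 1 ∧
    2 * y + z ≤ 2 * (1 - w) ∧ x + y + z ≤ 2 * (1 - w)) :
    G c d w x y z = c + d * (w + x + y + z) := by
  have : ![w, x, y, z] ∈ K := h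
  rw [G, Set.indicator_of_mem this]
  rfl

lemma G_neg (c d w x y z : ℝ) (h : ¬ (0 ≤ w ∧ 0 ≤ x ∧ 0 ≤ y ∧ 0 ≤ z ∧ w + x ≤ 1 ∧
    2 * y + z ≤ 2 * (1 - w) ∧ x + y + z ≤ 2 * (1 - w))) :
    G c d w x y z = 0 := by
  have : ![w, x, y, z] ∉ K := h
  rw [G, Set.indicator_of_notMem this]

lemma intZ1 (c d w x y : ℝ) (hw : 0 ≤ w) (hx : 0 ≤ x) (hwx : x ≤ 1 - w) (hy : 0 ≤ y)
    (hyx : y ≤ x) :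
    ∫ z, G c d w x y z = ((c + d * w + d * x) * (2 * (1 - w) - x) + d * (2 * (1 - w) - x) ^ 2 / 2)
      + (-(c + d * w + d * x)) * y + (-d / 2) * y ^ 2 + 0 * y ^ 3 + 0 * y ^ 4 := by
  rw [int_of_poly _ 0 (2 * (1 - w) - x - y) (c + d * (w + x + y)) d 0 0 0 (by linarith)]
  · ring
  · intro z h1 h2
    rw [G_pos _ _ _ _ _ _ (by refine ⟨?_, ?_, ?_, ?_, ?_, ?_, ?_⟩ <;> linarith)]
    ring
  · intro z hz
    apply G_neg
    rintro ⟨h1, h2, h3, h4, h5, h6, h7⟩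
    exact hz ⟨by linarith, by linarith⟩

lemma intZ2 (c d w x y : ℝ) (hw : 0 ≤ w) (hx : 0 ≤ x) (hwx : x ≤ 1 - w) (hy : y ≤ 1 - w)
    (hyx : x ≤ y) :
    ∫ z, G c d w x y z = ((c + d * w + d * x) * (2 * (1 - w)) + 2 * d * (1 - w) ^ 2)
      + (-2 * (c + d * w + d * x) - 2 * d * (1 - w)) * y + 0 * y ^ 2 + 0 * y ^ 3 + 0 * y ^ 4 := by
  rw [int_of_poly _ 0 (2 * (1 - w) - 2 * y) (c + d * (w + x + y)) d 0 0 0 (by linarith)]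
  · ring
  · intro z h1 h2
    rw [G_pos _ _ _ _ _ _ (by refine ⟨?_, ?_, ?_, ?_, ?_, ?_, ?_⟩ <;> linarith)]
    ring
  · intro z hz
    apply G_neg
    rintro ⟨h1, h2, h3, h4, h5, h6, h7⟩
    exact hz ⟨by linarith, by linarith⟩

lemma intY (c d w x : ℝ) (hw : 0 ≤ w) (hx : 0 ≤ x) (hwx : x ≤ 1 - w) :
    ∫ y, ∫ z, G c d w x y z = ((c + d * w) * (1 - w) ^ 2 + d * (1 - w) ^ 3)
      + (d * (1 - w) ^ 2) * x + (-(c + d * w) / 2 - d * (1 - w)) * x ^ 2 + (-d / 6) * x ^ 3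
      + 0 * x ^ 4 := by
  rw [int_of_poly2 _ 0 x (1 - w) _ _ _ _ _ _ _ _ _ _ hx hwx
    (fun y h1 h2 => intZ1 c d w x y hw hx hwx h1 h2)
    (fun y h1 h2 => intZ2 c d w x y hw hx hwx h2 h1)]
  · ring
  · intro y hy
    have : ∀ z, G c d w x y z = 0 := by
      intro z
      apply G_neg
      rintro ⟨h1, h2, h3, h4, h5, h6, h7⟩
      exact hy ⟨by linarith, by linarith⟩
    simp [this]

lemma intX (c d w : ℝ) (hw : 0 ≤ w) (hw1 : w ≤ 1) :
    ∫ x, ∫ y, ∫ z, G c d w x y z = (5 / 6 * c + 9 / 8 * d) + (5 / 6 * (d - 3 * c) - 9 / 2 * d) * w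
      + (5 / 6 * (3 * c - 3 * d) + 27 / 4 * d) * w ^ 2
      + (5 / 6 * (3 * d - c) - 9 / 2 * d) * w ^ 3 + (-5 / 6 * d + 9 / 8 * d) * w ^ 4 := by
  rw [int_of_poly _ 0 (1 - w) _ _ _ _ _ (by linarith)
    (fun x h1 h2 => intY c d w x hw h1 h2)]
  · ring
  · intro x hx
    have : ∀ y z, G c d w x y z = 0 := by
      intro y z
      apply G_neg
      rintro ⟨h1, h2, h3, h4, h5, h6, h7⟩
      exact hx ⟨by linarith, by linarith⟩
    simp [this]

lemma intW (c d : ℝ) :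
    ∫ w, ∫ x, ∫ y, ∫ z, G c d w x y z = 5 / 24 * c + 4 / 15 * d := by
  rw [int_of_poly _ 0 1 _ _ _ _ _ (by linarith)
    (fun w h1 h2 => intX c d w h1 h2)]
  · ring
  · intro w hw
    have : ∀ x y z, G c d w x y z = 0 := by
      intro x y z
      apply G_neg
      rintro ⟨h1, h2, h3, h4, h5, h6, h7⟩
      exact hw ⟨by linarith, by linarith⟩
    simp [this]

lemma main (c d : ℝ) :
    ∫ p in DeltaM4, (c + d * (p 0 + p 1 + p 2 + p 3)) = 5 / 24 * c + 4 / 15 * d := by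
  rw [delta_eq, ← integral_indicator K_closed.measurableSet,
    slice4 K K_closed K_sub _ (by fun_prop)]
  exact intW c d

end DM4

/-- The integral over Δ of the G-function `10 − 5(w+x+y+z)` of the valuation
`ν₍₋₁,₋₁₎ = 5·ord_{E_S}` equals `3/4`; equivalently, `∫_Δ (w+x+y+z) = 4/15`. -/
theorem integral_G_ES_DeltaM4 :
    (∫ p in DeltaM4, (10 - 5 * (p 0 + p 1 + p 2 + p 3)) = 3 / 4) ∧
      (∫ p in DeltaM4, (p 0 + p 1 + p 2 + p 3) = 4 / 15) := by
  constructor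
  · have h := DM4.main 10 (-5)
    norm_num [← sub_eq_add_neg] at h
    simpa using h
  · have h := DM4.main 0 1
    norm_num at h
    simpa using h
end

section
/- Let J and J' be the 5×5 complex matrices with rows and columns indexed by 0,…,4, where J has entry 1 at positions (0,3) and (1,4), entry −1 at positions (3,0) and (4,1), and 0 elsewhere, and J' has entry 1 at positions (1,3) and (2,4), entry −1 at positions (3,1) and (4,2), and 0 elsewhere. Then for any 5×5 complex matrix Q with trace 0, the following are equivalent: (i) there exist complex numbers α, β, γ, δ with Qᵀ·J + J·Q = α·J + β·J' and Qᵀ·J' + J'·Q = γ·J + δ·J'; (ii) there exist complex numbers a, b, c, d, e, f, g, h such that Q equals the matrix whose rows (indexed 0,…,4) are (−2d, 2b, 0, e, f), (c, −a−d, b, f, g), (0, 2c, −2a, g, h), (0, 0, 0, a+2d, −c), (0, 0, 0, −b, 2a+d). -/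
open Matrix

/-- Skew-symmetric matrix `J` of the 2-form `2(e₀₃* + e₁₄*)`. -/
def Jmat : Matrix (Fin 5) (Fin 5) ℂ :=
  !![0, 0, 0, 1, 0;
     0, 0, 0, 0, 1;
     0, 0, 0, 0, 0;
     -1, 0, 0, 0, 0;
     0, -1, 0, 0, 0]

/-- Skew-symmetric matrix `J'` of the 2-form `2(e₁₃* + e₂₄*)`. -/
def Jmat' : Matrix (Fin 5) (Fin 5) ℂ :=
  !![0, 0, 0, 0, 0;
     0, 0, 0, 1, 0;
     0, 0, 0, 0, 1;
     0, -1, 0, 0, 0;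
     0, 0, -1, 0, 0]

/-- Characterization of the Lie algebra `aut(M₄)` of a quintic Del Pezzo fourfold:
a traceless `5×5` complex matrix `Q` satisfies
`QᵀJ + JQ, QᵀJ' + J'Q ∈ ⟨J, J'⟩` iff it has the displayed shape. -/
theorem aut_M4_characterization (Q : Matrix (Fin 5) (Fin 5) ℂ) (hQ : Q.trace = 0) :
    (∃ α β γ δ : ℂ,
        Qᵀ * Jmat + Jmat * Q = α • Jmat + β • Jmat' ∧
        Qᵀ * Jmat' + Jmat' * Q = γ • Jmat + δ • Jmat') ↔
      (∃ a b c d e f g h : ℂ,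
        Q = !![-2*d, 2*b, 0, e, f;
               c, -a-d, b, f, g;
               0, 2*c, -2*a, g, h;
               0, 0, 0, a+2*d, -c;
               0, 0, 0, -b, 2*a+d]) := by
  constructor
  · rintro ⟨α, β, γ, δ, h1, h2⟩
    refine ⟨-Q 2 2 / 2, Q 1 2, Q 1 0, -Q 0 0 / 2, Q 0 3, Q 0 4, Q 1 4, Q 2 4, ?_⟩
    have e1 := fun i j => congrFun (congrFun h1 i) j
    have e2 := fun i j => congrFun (congrFun h2 i) j
    simp only [Matrix.trace, Fin.sum_univ_five, Matrix.diag_apply] at hQ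
    simp [Fin.forall_fin_succ, Matrix.mul_apply, Fin.sum_univ_five, Jmat, Jmat', Matrix.vecMul, dotProduct] at e1 e2
    clear h1 h2
    ext i j
    fin_cases i <;> fin_cases j <;> simp <;> grind
  · rintro ⟨a, b, c, d, e, f, g, h, rfl⟩
    refine ⟨a, b, c, d, ?_, ?_⟩ <;> ext i j <;> fin_cases i <;> fin_cases j <;>
      simp [Matrix.mul_apply, Fin.sum_univ_five, Jmat, Jmat'] <;> ring
end

section
/- Let J' be the 5×5 complex matrix with rows and columns indexed by 0,…,4 having entry 1 at positions (1,3) and (2,4), entry −1 at positions (3,1) and (4,2), and 0 elsewhere. Then for any 5×5 complex matrix Q with trace 0, the following are equivalent: (i) there exists a complex number μ with Qᵀ·J' + J'·Q = μ·J'; (ii) there exist complex numbers λ, λ₁, λ₂, λ₃, λ₄, a, b, c, d, f, g, h, p, q, r such that Q equals the matrix whose rows (indexed 0,…,4) are (−2λ, λ₁, λ₂, λ₃, λ₄), (0, a, b, f, g), (0, c, d, g, h), (0, p, q, λ−a, −c), (0, q, r, −b, λ−d). -/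
open Matrix

/-- Characterization of the Lie algebra `aut(M₅)` of a quintic Del Pezzo fivefold:
a traceless `5×5` complex matrix `Q` satisfies `QᵀJ' + J'Q ∈ ⟨J'⟩`
iff it has the displayed shape. -/
theorem aut_M5_characterization (Q : Matrix (Fin 5) (Fin 5) ℂ) (hQ : Q.trace = 0) :
    (∃ μ : ℂ, Qᵀ * Jmat' + Jmat' * Q = μ • Jmat') ↔
      (∃ lam lam₁ lam₂ lam₃ lam₄ a b c d f g h p q r : ℂ,
        Q = !![-2*lam, lam₁, lam₂, lam₃, lam₄;
               0, a, b, f, g;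
               0, c, d, g, h;
               0, p, q, lam - a, -c;
               0, q, r, -b, lam - d]) := by
  constructor
  · rintro ⟨m, hm⟩
    have e : ∀ i j, (Qᵀ * Jmat' + Jmat' * Q) i j = (m • Jmat') i j := fun i j => by rw [hm]
    simp only [Matrix.trace, Fin.sum_univ_five, Matrix.diag_apply] at hQ
    simp [Fin.forall_fin_succ, Matrix.mul_apply, Fin.sum_univ_five, Jmat', Matrix.vecMul, dotProduct] at e
    refine ⟨m, Q 0 1, Q 0 2, Q 0 3, Q 0 4, Q 1 1, Q 1 2, Q 2 1, Q 2 2, Q 1 3, Q 1 4, Q 2 4,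
      Q 3 1, Q 3 2, Q 4 2, ?_⟩
    ext i j
    fin_cases i <;> fin_cases j <;> simp <;> grind
  · rintro ⟨l, l1, l2, l3, l4, a, b, c, d, f, g, h, p, q, r, rfl⟩
    refine ⟨l, ?_⟩
    ext i j
    fin_cases i <;> fin_cases j <;>
      simp [Matrix.mul_apply, Fin.sum_univ_five, Jmat'] <;> ring
end

section
/- Let Δ^C = {(u,v,w) ∈ ℝ³ : 0 ≤ v ≤ u/2, 0 ≤ w ≤ 1−u+v, and w ≤ 1+2u−5v}. Then ∫_{Δ^C} (1−u+v−w)(1+2u−5v−w) du dv dw = 1/24; equivalently, (1/(5/4!)) · ∫_{Δ^C} 2(1−u+v−w)(1+2u−5v−w)/2! du dv dw = 1/5. -/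
open MeasureTheory

/-- Region `Δ^C = {(u,v,w) : 0 ≤ v ≤ u/2, 0 ≤ w ≤ 1−u+v, w ≤ 1+2u−5v}` in ℝ³,
with coordinates `(u, v, w)`. -/
def DeltaC : Set (ℝ × ℝ × ℝ) :=
  {p | 0 ≤ p.2.1 ∧ p.2.1 ≤ p.1 / 2 ∧ 0 ≤ p.2.2 ∧ p.2.2 ≤ 1 - p.1 + p.2.1 ∧
       p.2.2 ≤ 1 + 2 * p.1 - 5 * p.2.1}

lemma DeltaC_closed : IsClosed DeltaC := by
  unfold DeltaC
  simp only [Set.setOf_and]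
  refine IsClosed.inter ?_ (IsClosed.inter ?_ (IsClosed.inter ?_ (IsClosed.inter ?_ ?_))) <;>
    exact isClosed_le (by fun_prop) (by fun_prop)

lemma DeltaC_compact : IsCompact DeltaC := by
  have h : IsCompact ((Set.Icc (0:ℝ) 2) ×ˢ ((Set.Icc (0:ℝ) 1) ×ˢ (Set.Icc (0:ℝ) 1))) :=
    isCompact_Icc.prod (isCompact_Icc.prod isCompact_Icc)
  refine h.of_isClosed_subset DeltaC_closed ?_
  rintro ⟨u, v, w⟩ ⟨h1, h2, h3, h4, h5⟩
  simp only at h1 h2 h3 h4 h5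
  simp only [Set.mem_prod, Set.mem_Icc]
  refine ⟨⟨?_, ?_⟩, ⟨?_, ?_⟩, ⟨?_, ?_⟩⟩ <;> linarith

lemma int_indicator_Icc (a b : ℝ) (hab : a ≤ b) (f : ℝ → ℝ) :
    ∫ x, (Set.Icc a b).indicator f x = ∫ x in a..b, f x := by
  rw [integral_indicator measurableSet_Icc, integral_Icc_eq_integral_Ioc,
    intervalIntegral.integral_of_le hab]

lemma int_cubic (c0 c1 c2 c3 a b : ℝ) :
    ∫ x in a..b, (c0 + c1 * x + c2 * x ^ 2 + c3 * x ^ 3) =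
      (c0 * b + c1 * b ^ 2 / 2 + c2 * b ^ 3 / 3 + c3 * b ^ 4 / 4) -
      (c0 * a + c1 * a ^ 2 / 2 + c2 * a ^ 3 / 3 + c3 * a ^ 4 / 4) := by
  refine intervalIntegral.integral_eq_sub_of_hasDerivAt
    (f := fun x => c0 * x + c1 * x ^ 2 / 2 + c2 * x ^ 3 / 3 + c3 * x ^ 4 / 4) ?_ ?_
  · intro x _
    have h1 := (hasDerivAt_id x).const_mul c0
    have h2 := ((hasDerivAt_pow 2 x).const_mul c1).div_const 2
    have h3 := ((hasDerivAt_pow 3 x).const_mul c2).div_const 3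
    have h4 := ((hasDerivAt_pow 4 x).const_mul c3).div_const 4
    refine (((h1.add h2).add h3).add h4).congr_deriv ?_
    norm_num
    ring
  · exact (by fun_prop : Continuous _).intervalIntegrable _ _

/-- The inner integral over `u`, with `t = 1 - v - w`: the integral of `(t - s)(t + 2 s)`. -/
lemma inner_u (v w : ℝ) :
    ∫ u, DeltaC.indicator (fun p : ℝ × ℝ × ℝ =>
      (1 - p.1 + p.2.1 - p.2.2) * (1 + 2 * p.1 - 5 * p.2.1 - p.2.2)) (u, v, w) =
    (Set.Ici (0:ℝ)).indicator (fun v => (Set.Icc (0:ℝ) (1 - v)).indicator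
      (fun w => 5 / 6 * (1 - v - w) ^ 3) w) v := by
  by_cases h : 0 ≤ v ∧ 0 ≤ w ∧ w ≤ 1 - v
  · obtain ⟨hv, hw, hvw⟩ := h
    rw [Set.indicator_of_mem (show v ∈ Set.Ici (0:ℝ) from hv),
      Set.indicator_of_mem (show w ∈ Set.Icc (0:ℝ) (1 - v) from ⟨hw, hvw⟩)]
    have e : (fun u => DeltaC.indicator (fun p : ℝ × ℝ × ℝ =>
        (1 - p.1 + p.2.1 - p.2.2) * (1 + 2 * p.1 - 5 * p.2.1 - p.2.2)) (u, v, w)) =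
        (Set.Icc (2 * v) (1 + v - w)).indicator (fun u =>
          (1 + v - w) * (1 - 5 * v - w) + (2 * (1 + v - w) - (1 - 5 * v - w)) * u
            + (-2) * u ^ 2 + 0 * u ^ 3) := by
      funext u
      have hm : (u, v, w) ∈ DeltaC ↔ u ∈ Set.Icc (2 * v) (1 + v - w) := by
        simp only [DeltaC, Set.mem_setOf_eq, Set.mem_Icc]
        constructor
        · rintro ⟨h1, h2, h3, h4, h5⟩
          constructor <;> linarith
        · rintro ⟨h1, h2⟩
          refine ⟨?_, ?_, ?_, ?_, ?_⟩ <;> linarith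
      by_cases hu : u ∈ Set.Icc (2 * v) (1 + v - w)
      · rw [Set.indicator_of_mem hu, Set.indicator_of_mem (hm.2 hu)]
        ring
      · rw [Set.indicator_of_notMem hu, Set.indicator_of_notMem (fun h => hu (hm.1 h))]
    rw [e, int_indicator_Icc _ _ (by linarith), int_cubic]
    ring
  · have e : (fun u => DeltaC.indicator (fun p : ℝ × ℝ × ℝ =>
        (1 - p.1 + p.2.1 - p.2.2) * (1 + 2 * p.1 - 5 * p.2.1 - p.2.2)) (u, v, w)) =
        fun _ => 0 := by
      funext u
      refine Set.indicator_of_notMem ?_ _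
      rintro ⟨h1, h2, h3, h4, h5⟩
      simp only at h1 h2 h3 h4 h5
      exact h ⟨h1, h3, by linarith⟩
    rw [e, integral_zero]
    by_cases hv : v ∈ Set.Ici (0:ℝ)
    · rw [Set.indicator_of_mem hv, Set.indicator_of_notMem]
      exact fun hw => h ⟨hv, hw.1, hw.2⟩
    · rw [Set.indicator_of_notMem hv]

lemma inner_w (v : ℝ) :
    ∫ w, (Set.Ici (0:ℝ)).indicator (fun v => (Set.Icc (0:ℝ) (1 - v)).indicator
      (fun w => 5 / 6 * (1 - v - w) ^ 3) w) v =
    (Set.Icc (0:ℝ) 1).indicator (fun v => 5 / 24 * (1 - v) ^ 4) v := by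
  by_cases hv : v ∈ Set.Icc (0:ℝ) 1
  · have hv0 : v ∈ Set.Ici (0:ℝ) := hv.1
    simp only [Set.indicator_of_mem hv, Set.indicator_of_mem hv0]
    rw [int_indicator_Icc _ _ (by linarith [hv.2])]
    have e : (fun w : ℝ => 5 / 6 * (1 - v - w) ^ 3) = fun w =>
        5 / 6 * (1 - v) ^ 3 + (-(5 / 2) * (1 - v) ^ 2) * w + (5 / 2 * (1 - v)) * w ^ 2
          + (-(5 / 6)) * w ^ 3 := by
      funext w; ring
    rw [e, int_cubic]
    ring
  · rw [Set.indicator_of_notMem hv]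
    refine integral_eq_zero_of_ae (Filter.Eventually.of_forall fun w => ?_)
    simp only [Pi.zero_apply]
    by_cases hv0 : v ∈ Set.Ici (0:ℝ)
    · rw [Set.indicator_of_mem hv0, Set.indicator_of_notMem]
      exact fun hw => hv ⟨hv0, by linarith [hw.1, hw.2]⟩
    · rw [Set.indicator_of_notMem hv0]

/-- The computation `S(W^F_{•••}; C) = 1/5`:
`∫_{Δ^C} (1−u+v−w)(1+2u−5v−w) du dv dw = 1/24`. -/
theorem S_WF_C :
    ∫ p in DeltaC,
        ((1 - p.1 + p.2.1 - p.2.2) * (1 + 2 * p.1 - 5 * p.2.1 - p.2.2)) = 1 / 24 := by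
  have hint : Integrable (DeltaC.indicator (fun p : ℝ × ℝ × ℝ =>
      (1 - p.1 + p.2.1 - p.2.2) * (1 + 2 * p.1 - 5 * p.2.1 - p.2.2)))
      ((volume : Measure ℝ).prod (volume : Measure (ℝ × ℝ))) := by
    rw [integrable_indicator_iff DeltaC_closed.measurableSet]
    exact ContinuousOn.integrableOn_compact (μ := (volume : Measure (ℝ × ℝ × ℝ)))
      DeltaC_compact (by fun_prop)
  rw [← integral_indicator DeltaC_closed.measurableSet, Measure.volume_eq_prod,
    integral_prod_symm _ hint]
  have h2 := hint.integral_prod_right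
  have e : (fun y : ℝ × ℝ => ∫ x, DeltaC.indicator (fun p : ℝ × ℝ × ℝ =>
      (1 - p.1 + p.2.1 - p.2.2) * (1 + 2 * p.1 - 5 * p.2.1 - p.2.2)) (x, y)) =
      fun y => (Set.Ici (0:ℝ)).indicator (fun v => (Set.Icc (0:ℝ) (1 - v)).indicator
      (fun w => 5 / 6 * (1 - v - w) ^ 3) y.2) y.1 := by
    funext ⟨v, w⟩
    exact inner_u v w
  rw [e] at h2 ⊢
  rw [Measure.volume_eq_prod] at h2 ⊢
  rw [integral_prod _ h2]
  simp only [inner_w]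
  rw [int_indicator_Icc _ _ zero_le_one,
    intervalIntegral.integral_eq_sub_of_hasDerivAt (f := fun x : ℝ => -(1 / 24) * (1 - x) ^ 5)]
  · norm_num
  · intro x _
    refine ((((hasDerivAt_id x).const_sub 1).pow 5).const_mul (-(1 / 24) : ℝ)).congr_deriv ?_
    norm_num
    ring
  · exact (by fun_prop : Continuous _).intervalIntegrable _ _
end

section
/- Define V(t,s) for 0 ≤ t ≤ 1 and 0 ≤ s ≤ 1+t by: V(t,s) = 4(1−t)((1−t)²t + 3(1−t)t² + 2t³ − s³) for 0 ≤ s ≤ t; V(t,s) = 4(s−t)(3(1−s)²t + 3(1−s)t² + t³) + 4(1−s)t((1−s)² + 3(1−s)t + t²) for t ≤ s ≤ 1; V(t,s) = 4(1−t)(1+t−s)³ for 1 ≤ s ≤ 1+t. Then ∫₀¹ ∫₀^{1+t} V(t,s) ds dt = 23/30; equivalently (1/(5/5!)) · ∫₀¹ ∫₀^{1+t} V(t,s)/4! ds dt = 23/30. -/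
open MeasureTheory intervalIntegral

/-- The volume function `V(t,s) = vol(W^{E_W}_{(1,t)} − s E_l)` on the quintic Del Pezzo
fivefold, defined piecewise for `0 ≤ s ≤ t`, `t ≤ s ≤ 1` and `1 ≤ s ≤ 1+t`
(the three formulas agree at the break points `s = t` and `s = 1`). -/
noncomputable def VolEW (t s : ℝ) : ℝ :=
  if s ≤ t then
    4 * (1 - t) * ((1 - t) ^ 2 * t + 3 * (1 - t) * t ^ 2 + 2 * t ^ 3 - s ^ 3)
  else if s ≤ 1 then
    4 * (s - t) * (3 * (1 - s) ^ 2 * t + 3 * (1 - s) * t ^ 2 + t ^ 3) +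
      4 * (1 - s) * t * ((1 - s) ^ 2 + 3 * (1 - s) * t + t ^ 2)
  else
    4 * (1 - t) * (1 + t - s) ^ 3

theorem integral_of_antideriv (f F : ℝ → ℝ) (a b : ℝ) (hd : ∀ x, HasDerivAt F (f x) x)
    (hf : Continuous f) : ∫ x in a..b, f x = F b - F a :=
  integral_eq_sub_of_hasDerivAt (fun x _ => hd x) (hf.intervalIntegrable _ _)

theorem VolEW_cont (t : ℝ) (ht1 : t ≤ 1) : Continuous (VolEW t) := by
  unfold VolEW
  refine Continuous.if_le (by fun_prop) ?_ continuous_id continuous_const ?_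
  · refine Continuous.if_le (by fun_prop) (by fun_prop) continuous_id continuous_const ?_
    intro x hx
    have : x = 1 := hx
    subst this
    ring
  · intro x hx
    have : x = t := hx
    subst this
    rw [if_pos ht1]
    ring

theorem VolEW_inner (t : ℝ) (ht0 : 0 ≤ t) (ht1 : t ≤ 1) :
    ∫ s in (0:ℝ)..(1 + t), VolEW t s =
      (4 * t ^ 2 - 5 * t ^ 4 + t ^ 5) +
      (2 * t * (1 - t) ^ 4 + 6 * t ^ 2 * (1 - t) ^ 3 + 4 * t ^ 3 * (1 - t) ^ 2) +
      (1 - t) * t ^ 4 := by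
  have hI : ∀ a b, IntervalIntegrable (VolEW t) volume a b :=
    fun a b => (VolEW_cont t ht1).intervalIntegrable a b
  rw [← integral_add_adjacent_intervals (hI 0 1) (hI 1 (1 + t)),
    ← integral_add_adjacent_intervals (hI 0 t) (hI t 1)]
  congr 1
  · congr 1
    · rw [integral_congr (g := fun s => 4 * (1 - t) * ((t + t ^ 2) - s ^ 3)),
        integral_of_antideriv _ (fun s => 4 * (1 - t) * ((t + t ^ 2) * s - s ^ 4 / 4))]
      · ring
      · intro x
        have h := (((hasDerivAt_id x).const_mul (t + t ^ 2)).sub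
          (((hasDerivAt_id x).pow 4).div_const 4)).const_mul (4 * (1 - t))
        refine HasDerivAt.congr_deriv h ?_
        simp only [id]
        push_cast
        ring
      · fun_prop
      · intro s hs
        rw [Set.uIcc_of_le ht0] at hs
        simp only [VolEW, if_pos hs.2]
        ring
    · rw [integral_congr (g := fun s => -8 * t * (1 - s) ^ 3 + 12 * (1 - t) * t * (1 - s) ^ 2
          + 12 * (1 - t) * t ^ 2 * (1 - s) + 4 * (1 - t) * t ^ 3),
        integral_of_antideriv _ (fun s => 2 * t * (1 - s) ^ 4 - 4 * (1 - t) * t * (1 - s) ^ 3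
          - 6 * (1 - t) * t ^ 2 * (1 - s) ^ 2 - 4 * (1 - t) * t ^ 3 * (1 - s))]
      · ring
      · intro x
        have h0 := (hasDerivAt_id x).const_sub 1
        have h := ((((h0.pow 4).const_mul (2 * t)).sub
          ((h0.pow 3).const_mul (4 * (1 - t) * t))).sub
          ((h0.pow 2).const_mul (6 * (1 - t) * t ^ 2))).sub
          (h0.const_mul (4 * (1 - t) * t ^ 3))
        refine HasDerivAt.congr_deriv h ?_
        simp only [id]
        push_cast
        ring
      · fun_prop
      · intro s hs
        rw [Set.uIcc_of_le ht1] at hs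
        simp only [VolEW, if_pos hs.2]
        split_ifs with h
        · have : s = t := le_antisymm h hs.1
          subst this
          ring
        · ring
  · rw [integral_congr (g := fun s => 4 * (1 - t) * (1 + t - s) ^ 3),
      integral_of_antideriv _ (fun s => - (1 - t) * (1 + t - s) ^ 4)]
    · ring
    · intro x
      have h := (((hasDerivAt_id x).const_sub (1 + t)).pow 4).const_mul (-(1 - t))
      refine HasDerivAt.congr_deriv h ?_
      simp only [id]
      push_cast
      ring
    · fun_prop
    · intro s hs
      rw [Set.uIcc_of_le (by linarith)] at hs
      simp only [VolEW]
      split_ifs with h h'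
      · have h1 : s = 1 := le_antisymm (h.trans ht1) hs.1
        have h2 : t = 1 := le_antisymm ht1 (hs.1.trans h)
        subst h1 h2
        ring
      · have h1 : s = 1 := le_antisymm h' hs.1
        subst h1
        ring
      · rfl

/-- The computation `S(W^{E_W}_{••}; E_l) = 23/30`:
`∫₀¹ ∫₀^{1+t} V(t,s) ds dt = 23/30`. -/
theorem S_WEW_El :
    ∫ t in (0:ℝ)..1, (∫ s in (0:ℝ)..(1 + t), VolEW t s) = 23 / 30 := by
  rw [integral_congr (g := fun t => 2 * t + 2 * t ^ 2 - 2 * t ^ 3 - 2 * t ^ 4),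
    integral_of_antideriv _ (fun t => t ^ 2 + 2 / 3 * t ^ 3 - 1 / 2 * t ^ 4 - 2 / 5 * t ^ 5)]
  · norm_num
  · intro x
    have h0 := hasDerivAt_id x
    have h := (((h0.pow 2).add ((h0.pow 3).const_mul (2 / 3))).sub
      ((h0.pow 4).const_mul (1 / 2))).sub ((h0.pow 5).const_mul (2 / 5))
    refine HasDerivAt.congr_deriv h ?_
    simp only [id]
    push_cast
    ring
  · fun_prop
  · intro t ht
    rw [Set.uIcc_of_le zero_le_one] at ht
    simp only
    rw [VolEW_inner t ht.1 ht.2]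
    ring
end

section
/- Let Δ_A = {(t,s,r) ∈ ℝ³ : 0<t<1, 0<s<1, ((s<t and r>0) or (s>t and r>s−t)), and ((s+t<1 and r<s) or (s+t>1 and r<1−t))}, Δ_B = {(t,s,r) : 0<t<1, −1+t+s−2r>0, and ((0<s<1 and s+t>1 and r>1−t) or (1<s<1+t and r>s−t))}, Δ_{C1} = {(t,s,r) : 0<t<1, t<s<1, 0<r<s−t}, Δ_{C2} = {(t,s,r) : 0<t<1, 1<s<1+t, 0<r<s−t}, and set f_A = 6r(1−t−r)(s−r) + 3(1−t)(s−r)², f_B = 3(1−t)(1−t+s−2r)², f_{C1} = 6(s−t)(1−s)t + 3(1−t)t², f_{C2} = 3(1−t)(1+t−s)². Then 4·(∫_{Δ_A} f_A + ∫_{Δ_B} f_B + ∫_{Δ_{C1}} f_{C1} + ∫_{Δ_{C2}} f_{C2}) = 154/405, i.e. the sum of the four integrals equals 77/810. -/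
open MeasureTheory

/-- Region `Δ_A` in ℝ³, coordinates `(t, s, r)`. -/
def DeltaA : Set (ℝ × ℝ × ℝ) :=
  {p | 0 < p.1 ∧ p.1 < 1 ∧ 0 < p.2.1 ∧ p.2.1 < 1 ∧
       ((p.2.1 < p.1 ∧ p.2.2 > 0) ∨ (p.2.1 > p.1 ∧ p.2.2 > p.2.1 - p.1)) ∧
       ((p.2.1 + p.1 < 1 ∧ p.2.2 < p.2.1) ∨ (p.2.1 + p.1 > 1 ∧ p.2.2 < 1 - p.1))}

/-- Region `Δ_B` in ℝ³, coordinates `(t, s, r)`. -/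
def DeltaB : Set (ℝ × ℝ × ℝ) :=
  {p | 0 < p.1 ∧ p.1 < 1 ∧ -1 + p.1 + p.2.1 - 2 * p.2.2 > 0 ∧
       ((0 < p.2.1 ∧ p.2.1 < 1 ∧ p.2.1 + p.1 > 1 ∧ p.2.2 > 1 - p.1) ∨
        (1 < p.2.1 ∧ p.2.1 < 1 + p.1 ∧ p.2.2 > p.2.1 - p.1))}

/-- Region `Δ_{C1}` in ℝ³, coordinates `(t, s, r)`. -/
def DeltaC1 : Set (ℝ × ℝ × ℝ) :=
  {p | 0 < p.1 ∧ p.1 < 1 ∧ p.1 < p.2.1 ∧ p.2.1 < 1 ∧ 0 < p.2.2 ∧ p.2.2 < p.2.1 - p.1}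

/-- Region `Δ_{C2}` in ℝ³, coordinates `(t, s, r)`. -/
def DeltaC2 : Set (ℝ × ℝ × ℝ) :=
  {p | 0 < p.1 ∧ p.1 < 1 ∧ 1 < p.2.1 ∧ p.2.1 < 1 + p.1 ∧ 0 < p.2.2 ∧ p.2.2 < p.2.1 - p.1}

lemma poly_int (c0 c1 c2 c3 c4 c5 a b : ℝ) (f : ℝ → ℝ)
    (hf : ∀ x, f x = c0 + c1 * x + c2 * x^2 + c3 * x^3 + c4 * x^4 + c5 * x^5) :
    ∫ x in a..b, f x = c0 * (b - a) + c1 * (b^2 - a^2) / 2 + c2 * (b^3 - a^3) / 3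
      + c3 * (b^4 - a^4) / 4 + c4 * (b^5 - a^5) / 5 + c5 * (b^6 - a^6) / 6 := by
  have key : ∀ x ∈ Set.uIcc a b, HasDerivAt (fun x => c0 * x + c1 * x^2 / 2 + c2 * x^3 / 3
      + c3 * x^4 / 4 + c4 * x^5 / 5 + c5 * x^6 / 6) (f x) x := by
    intro x _
    have h := (((((((hasDerivAt_id x).const_mul c0).add
      (((hasDerivAt_pow 2 x).const_mul c1).div_const 2)).add
      (((hasDerivAt_pow 3 x).const_mul c2).div_const 3)).add
      (((hasDerivAt_pow 4 x).const_mul c3).div_const 4)).add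
      (((hasDerivAt_pow 5 x).const_mul c4).div_const 5)).add
      (((hasDerivAt_pow 6 x).const_mul c5).div_const 6))
    refine HasDerivAt.congr_deriv h ?_
    rw [hf]; norm_num; ring
  have hc : Continuous f := by
    have : f = fun x => c0 + c1 * x + c2 * x^2 + c3 * x^3 + c4 * x^4 + c5 * x^5 := funext hf
    rw [this]; fun_prop
  rw [intervalIntegral.integral_eq_sub_of_hasDerivAt key (hc.intervalIntegrable _ _)]
  ring

/-- integral over a region `e<x<g, c x<y<d x, a x y<z<b x y`. -/
lemma tri (f : ℝ × ℝ × ℝ → ℝ) (hf : Continuous f) (e g : ℝ) (c d : ℝ → ℝ) (a b : ℝ → ℝ → ℝ)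
    (U : Set (ℝ × ℝ × ℝ)) (hU : IsOpen U)
    (hUb : U ⊆ Set.Icc (0, 0, 0) (2, 2, 2))
    (hmem : ∀ x y z, (x, y, z) ∈ U ↔ (e < x ∧ x < g) ∧ (c x < y ∧ y < d x) ∧ (a x y < z ∧ z < b x y))
    (heg : e ≤ g) (hcd : ∀ x, e < x → x < g → c x ≤ d x)
    (hab : ∀ x y, e < x → x < g → c x < y → y < d x → a x y ≤ b x y) :
    ∫ p in U, f p = ∫ x in e..g, ∫ y in c x..d x, ∫ z in a x y..b x y, f (x, y, z) := by
  have hi : Integrable (U.indicator f) := by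
    rw [integrable_indicator_iff hU.measurableSet]
    exact (hf.continuousOn.integrableOn_compact isCompact_Icc).mono_set hUb
  have hi2 : ∀ x, Integrable (fun q : ℝ × ℝ => U.indicator f (x, q)) := by
    intro x
    have hc : Continuous (fun q : ℝ × ℝ => (x, q)) := by fun_prop
    have : (fun q : ℝ × ℝ => U.indicator f (x, q))
        = ((fun q : ℝ × ℝ => (x, q)) ⁻¹' U).indicator (fun q => f (x, q)) := by
      ext q; rfl
    rw [this, integrable_indicator_iff (hU.preimage hc).measurableSet]
    refine ((hf.comp hc).continuousOn.integrableOn_compact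
      (isCompact_Icc (a := ((0:ℝ), (0:ℝ))) (b := (2, 2)))).mono_set ?_
    intro q hq
    have := hUb hq
    exact ⟨this.1.2, this.2.2⟩
  rw [← integral_indicator hU.measurableSet, Measure.volume_eq_prod, integral_prod _ hi,
    intervalIntegral.integral_of_le heg, integral_Ioc_eq_integral_Ioo,
    ← integral_indicator measurableSet_Ioo]
  congr 1; ext x
  rw [Measure.volume_eq_prod, integral_prod _ (hi2 x)]
  by_cases hx : x ∈ Set.Ioo e g
  · rw [Set.indicator_of_mem hx, intervalIntegral.integral_of_le (hcd x hx.1 hx.2),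
      integral_Ioc_eq_integral_Ioo, ← integral_indicator measurableSet_Ioo]
    congr 1; ext y
    by_cases hy : y ∈ Set.Ioo (c x) (d x)
    · rw [Set.indicator_of_mem hy, intervalIntegral.integral_of_le (hab x y hx.1 hx.2 hy.1 hy.2),
        integral_Ioc_eq_integral_Ioo, ← integral_indicator measurableSet_Ioo]
      congr 1; ext z
      by_cases hz : z ∈ Set.Ioo (a x y) (b x y)
      · rw [Set.indicator_of_mem hz, Set.indicator_of_mem ((hmem x y z).2 ⟨hx, hy, hz⟩)]
      · rw [Set.indicator_of_notMem hz,
          Set.indicator_of_notMem (fun h => hz ((hmem x y z).1 h).2.2)]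
    · rw [Set.indicator_of_notMem hy]
      simp only [fun z => Set.indicator_of_notMem (fun h => hy ((hmem x y z).1 h).2.1) f,
        integral_zero]
  · rw [Set.indicator_of_notMem hx]
    simp only [fun y z => Set.indicator_of_notMem (fun h => hx ((hmem x y z).1 h).1) f,
      integral_zero]

lemma swap_int (f : ℝ × ℝ × ℝ → ℝ) (U : Set (ℝ × ℝ × ℝ)) :
    ∫ p in U, f p = ∫ p in {p : ℝ × ℝ × ℝ | (p.1, p.2.2, p.2.1) ∈ U}, f (p.1, p.2.2, p.2.1) := by
  have h : MeasurePreserving (Prod.map id Prod.swap : ℝ × ℝ × ℝ → ℝ × ℝ × ℝ) :=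
    (MeasurePreserving.id volume).prod Measure.measurePreserving_swap
  have he : MeasurableEmbedding (Prod.map id Prod.swap : ℝ × ℝ × ℝ → ℝ × ℝ × ℝ) :=
    ((MeasurableEquiv.refl ℝ).prodCongr MeasurableEquiv.prodComm).measurableEmbedding
  exact (h.setIntegral_preimage_emb he f U).symm

lemma null_graph (g : ℝ → ℝ) (hg : Continuous g) :
    volume {p : ℝ × ℝ × ℝ | p.2.1 = g p.1} = 0 := by
  have hm : MeasurableSet {p : ℝ × ℝ × ℝ | p.2.1 = g p.1} :=
    (isClosed_eq (by fun_prop) (by fun_prop)).measurableSet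
  rw [Measure.volume_eq_prod, Measure.measure_prod_null hm]
  refine Filter.Eventually.of_forall fun x => ?_
  have : Prod.mk x ⁻¹' {p : ℝ × ℝ × ℝ | p.2.1 = g p.1} = {g x} ×ˢ Set.univ := by
    ext q; simp
  simp only [this, Measure.volume_eq_prod, Measure.prod_prod]
  simp

lemma null_aux {A R : Set (ℝ × ℝ × ℝ)} (N : Set (ℝ × ℝ × ℝ)) (hN : volume N = 0)
    (hAR : A ⊆ R) (h : R ⊆ A ∪ N) (f : ℝ × ℝ × ℝ → ℝ) : ∫ p in A, f p = ∫ p in R, f p := by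
  apply setIntegral_congr_set
  refine Filter.EventuallyLE.antisymm (ae_of_all _ hAR) ?_
  refine ae_le_set.2 (measure_mono_null ?_ hN)
  rintro p ⟨hp, hn⟩
  exact (h hp).resolve_left hn

lemma int_A : (∫ p in DeltaA, (6 * p.2.2 * (1 - p.1 - p.2.2) * (p.2.1 - p.2.2) +
              3 * (1 - p.1) * (p.2.1 - p.2.2) ^ 2)) = 1 / 40 := by
  rw [null_aux (R := {p : ℝ × ℝ × ℝ | (0 < p.1 ∧ p.1 < 1) ∧ (0 < p.2.2 ∧ p.2.2 < 1 - p.1) ∧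
      (p.2.2 < p.2.1 ∧ p.2.1 < p.2.2 + p.1)})
    ({p | p.2.1 = p.1} ∪ {p | p.2.1 = 1 - p.1})
    (measure_union_null (null_graph (fun x => x) (by fun_prop))
      (null_graph (fun x => 1 - x) (by fun_prop)))]
  rotate_left
  · rintro ⟨t, s, r⟩ ⟨h1, h2, h3, h4, h5, h6⟩
    simp only [Set.mem_ofPred_eq] at *
    rcases h5 with h5 | h5 <;> rcases h6 with h6 | h6 <;>
      refine ⟨⟨?_, ?_⟩, ⟨?_, ?_⟩, ?_, ?_⟩ <;> linarith [h5.1, h5.2, h6.1, h6.2]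
  · rintro ⟨t, s, r⟩ ⟨⟨h1, h2⟩, ⟨h3, h4⟩, h5, h6⟩
    simp only [DeltaA, Set.mem_union, Set.mem_ofPred_eq] at *
    rcases lt_trichotomy s t with h | h | h
    · rcases lt_trichotomy s (1 - t) with k | k | k
      · exact Or.inl ⟨h1, h2, by linarith, by linarith, Or.inl ⟨h, h3⟩, Or.inl ⟨by linarith, h5⟩⟩
      · exact Or.inr (Or.inr k)
      · exact Or.inl ⟨h1, h2, by linarith, by linarith, Or.inl ⟨h, h3⟩, Or.inr ⟨by linarith, h4⟩⟩
    · exact Or.inr (Or.inl h)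
    · rcases lt_trichotomy s (1 - t) with k | k | k
      · exact Or.inl ⟨h1, h2, by linarith, by linarith, Or.inr ⟨h, by linarith⟩,
          Or.inl ⟨by linarith, h5⟩⟩
      · exact Or.inr (Or.inr k)
      · exact Or.inl ⟨h1, h2, by linarith, by linarith, Or.inr ⟨h, by linarith⟩,
          Or.inr ⟨by linarith, h4⟩⟩
  rw [swap_int]
  rw [tri _ (by fun_prop) 0 1 (fun _ => 0) (fun t => 1 - t) (fun _ r => r) (fun t r => r + t)]
  rotate_left
  · simp only [Set.mem_ofPred_eq, Set.ofPred_and]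
    repeat' apply IsOpen.inter
    all_goals exact isOpen_lt (by fun_prop) (by fun_prop)
  · rintro ⟨t, r, s⟩ ⟨⟨h1, h2⟩, ⟨h3, h4⟩, h5, h6⟩
    simp only at h1 h2 h3 h4 h5 h6
    exact ⟨⟨by simp only; linarith, by simp only; linarith, by simp only; linarith⟩,
      ⟨by simp only; linarith, by simp only; linarith, by simp only; linarith⟩⟩
  · intro x y z; rfl
  · norm_num
  · intro x h1 h2; linarith
  · intro x y h1 h2 h3 h4; linarith
  have e1 : ∀ t r : ℝ, (∫ s in r..(r + t), (6 * r * (1 - t - r) * (s - r) +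
      3 * (1 - t) * (s - r) ^ 2)) = (3) * t^2 * r + (-3) * t^2 * r^2 + (1) * t^3 + (-3) * t^3 * r + (-1) * t^4 := by
    intro t r
    rw [poly_int ((-3) * r^2 + (6) * r^3 + (3) * t * r^2) ((-6) * r^2) ((3) + (-3) * t) (0) (0) (0) _ _ _ (fun s => by ring)]
    ring
  have e2 : ∀ t : ℝ, (∫ r in (0:ℝ)..(1 - t), ((3) * t^2 * r + (-3) * t^2 * r^2 + (1) * t^3 + (-3) * t^3 * r + (-1) * t^4)) = (1/2) * t^2 + (-1/2) * t^3 + (-1/2) * t^4 + (1/2) * t^5 := by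
    intro t
    rw [poly_int ((1) * t^3 + (-1) * t^4) ((3) * t^2 + (-3) * t^3) ((-3) * t^2) (0) (0) (0) _ _ _ (fun r => by ring)]
    ring
  simp only [e1, e2]
  rw [poly_int (0) (0) ((1/2)) ((-1/2)) ((-1/2)) ((1/2)) _ _ _ (fun t => by ring)]
  norm_num

lemma int_B : (∫ p in DeltaB, 3 * (1 - p.1) * (1 - p.1 + p.2.1 - 2 * p.2.2) ^ 2) = 11 / 3240 := by
  rw [null_aux (R := {p : ℝ × ℝ × ℝ | (2 / 3 < p.1 ∧ p.1 < 1) ∧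
      (1 - p.1 < p.2.2 ∧ p.2.2 < 2 * p.1 - 1) ∧
      (2 * p.2.2 + 1 - p.1 < p.2.1 ∧ p.2.1 < p.2.2 + p.1)})
    {p | p.2.1 = 1} (null_graph (fun _ => 1) (by fun_prop))]
  rotate_left
  · rintro ⟨t, s, r⟩ ⟨h1, h2, h3, h5⟩
    simp only [Set.mem_ofPred_eq] at *
    rcases h5 with ⟨h5, h6, h7, h8⟩ | ⟨h5, h6, h7⟩ <;>
      refine ⟨⟨?_, ?_⟩, ⟨?_, ?_⟩, ?_, ?_⟩ <;> linarith
  · rintro ⟨t, s, r⟩ ⟨⟨h1, h2⟩, ⟨h3, h4⟩, h5, h6⟩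
    simp only [DeltaB, Set.mem_union, Set.mem_ofPred_eq] at *
    rcases lt_trichotomy s 1 with h | h | h
    · exact Or.inl ⟨by linarith, h2, by linarith, Or.inl ⟨by linarith, h, by linarith, h3⟩⟩
    · exact Or.inr h
    · exact Or.inl ⟨by linarith, h2, by linarith, Or.inr ⟨h, by linarith, by linarith⟩⟩
  rw [swap_int]
  rw [tri _ (by fun_prop) (2 / 3) 1 (fun t => 1 - t) (fun t => 2 * t - 1)
    (fun t r => 2 * r + 1 - t) (fun t r => r + t)]
  rotate_left
  · simp only [Set.mem_ofPred_eq, Set.ofPred_and]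
    repeat' apply IsOpen.inter
    all_goals exact isOpen_lt (by fun_prop) (by fun_prop)
  · rintro ⟨t, r, s⟩ ⟨⟨h1, h2⟩, ⟨h3, h4⟩, h5, h6⟩
    simp only at h1 h2 h3 h4 h5 h6
    exact ⟨⟨by simp only; linarith, by simp only; linarith, by simp only; linarith⟩,
      ⟨by simp only; linarith, by simp only; linarith, by simp only; linarith⟩⟩
  · intro x y z; rfl
  · norm_num
  · intro x h1 h2; linarith
  · intro x y h1 h2 h3 h4; linarith
  have e1 : ∀ t r : ℝ, (∫ s in (2 * r + 1 - t)..(r + t),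
      3 * (1 - t) * (1 - t + s - 2 * r) ^ 2) = (-7) + (-3) * r + (3) * r^2 + (-1) * r^3 + (31) * t + (3) * t * r + (-3) * t * r^2 + (1) * t * r^3 + (-48) * t^2 + (32) * t^3 + (-8) * t^4 := by
    intro t r
    rw [poly_int ((3) + (-12) * r + (12) * r^2 + (-9) * t + (24) * t * r + (-12) * t * r^2 + (9) * t^2 + (-12) * t^2 * r + (-3) * t^3) ((6) + (-12) * r + (-12) * t + (12) * t * r + (6) * t^2) ((3) + (-3) * t) (0) (0) (0) _ _ _ (fun s => by ring)]
    ring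
  have e2 : ∀ t : ℝ, (∫ r in (1 - t)..(2 * t - 1), ((-7) + (-3) * r + (3) * r^2 + (-1) * r^3 + (31) * t + (3) * t * r + (-3) * t * r^2 + (1) * t * r^3 + (-48) * t^2 + (32) * t^3 + (-8) * t^4)) = (12) + (-68) * t + (152) * t^2 + (-168) * t^3 + (369/4) * t^4 + (-81/4) * t^5 := by
    intro t
    rw [poly_int ((-7) + (31) * t + (-48) * t^2 + (32) * t^3 + (-8) * t^4) ((-3) + (3) * t) ((3) + (-3) * t) ((-1) + (1) * t) (0) (0) _ _ _ (fun r => by ring)]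
    ring
  simp only [e1, e2]
  rw [poly_int ((12)) ((-68)) ((152)) ((-168)) ((369/4)) ((-81/4)) _ _ _ (fun t => by ring)]
  norm_num

lemma int_C1 : (∫ p in DeltaC1, (6 * (p.2.1 - p.1) * (1 - p.2.1) * p.1 + 3 * (1 - p.1) * p.1 ^ 2)) = 1 / 24 := by
  rw [tri _ (by fun_prop) 0 1 (fun t => t) (fun t => 1) (fun _ _ => 0) (fun t s => s - t)]
  rotate_left
  · simp only [DeltaC1, Set.ofPred_and]
    repeat' apply IsOpen.inter
    all_goals exact isOpen_lt (by fun_prop) (by fun_prop)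
  · rintro ⟨t, s, r⟩ ⟨h1, h2, h3, h4, h5, h6⟩
    simp only at h1 h2 h3 h4 h5 h6
    exact ⟨⟨by simp only; linarith, by simp only; linarith, by simp only; linarith⟩,
      ⟨by simp only; linarith, by simp only; linarith, by simp only; linarith⟩⟩
  · intro x y z; simp only [DeltaC1, Set.mem_ofPred_eq]; tauto
  · norm_num
  · intro x h1 h2; linarith
  · intro x y h1 h2 h3 h4; linarith
  have e1 : ∀ t s : ℝ, (∫ _r in (0:ℝ)..(s - t), (6 * (s - t) * (1 - s) * t + 3 * (1 - t) * t ^ 2)) = (6) * t * s^2 + (-6) * t * s^3 + (-9) * t^2 * s + (12) * t^2 * s^2 + (3) * t^3 + (-9) * t^3 * s + (3) * t^4 := by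
    intro t s
    rw [poly_int ((6) * t * s + (-6) * t * s^2 + (-3) * t^2 + (6) * t^2 * s + (-3) * t^3) (0) (0) (0) (0) (0) _ _ _ (fun r => by ring)]
    ring
  have e2 : ∀ t : ℝ, (∫ s in (t : ℝ)..(1), ((6) * t * s^2 + (-6) * t * s^3 + (-9) * t^2 * s + (12) * t^2 * s^2 + (3) * t^3 + (-9) * t^3 * s + (3) * t^4)) = (1/2) * t + (-1/2) * t^2 + (-3/2) * t^3 + (5/2) * t^4 + (-1) * t^5 := by
    intro t
    rw [poly_int ((3) * t^3 + (3) * t^4) ((-9) * t^2 + (-9) * t^3) ((6) * t + (12) * t^2) ((-6) * t) (0) (0) _ _ _ (fun s => by ring)]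
    ring
  simp only [e1, e2]
  rw [poly_int (0) ((1/2)) ((-1/2)) ((-3/2)) ((5/2)) ((-1)) _ _ _ (fun t => by ring)]
  norm_num

lemma int_C2 : (∫ p in DeltaC2, (3 * (1 - p.1) * (1 + p.1 - p.2.1) ^ 2)) = 1 / 40 := by
  rw [tri _ (by fun_prop) 0 1 (fun t => 1) (fun t => 1 + t) (fun _ _ => 0) (fun t s => s - t)]
  rotate_left
  · simp only [DeltaC2, Set.ofPred_and]
    repeat' apply IsOpen.inter
    all_goals exact isOpen_lt (by fun_prop) (by fun_prop)
  · rintro ⟨t, s, r⟩ ⟨h1, h2, h3, h4, h5, h6⟩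
    simp only at h1 h2 h3 h4 h5 h6
    exact ⟨⟨by simp only; linarith, by simp only; linarith, by simp only; linarith⟩,
      ⟨by simp only; linarith, by simp only; linarith, by simp only; linarith⟩⟩
  · intro x y z; simp only [DeltaC2, Set.mem_ofPred_eq]; tauto
  · norm_num
  · intro x h1 h2; linarith
  · intro x y h1 h2 h3 h4; linarith
  have e1 : ∀ t s : ℝ, (∫ _r in (0:ℝ)..(s - t), (3 * (1 - t) * (1 + t - s) ^ 2)) = (3) * s + (-6) * s^2 + (3) * s^3 + (-3) * t + (9) * t * s + (-3) * t * s^2 + (-3) * t * s^3 + (-3) * t^2 + (-3) * t^2 * s + (9) * t^2 * s^2 + (3) * t^3 + (-9) * t^3 * s + (3) * t^4 := by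
    intro t s
    rw [poly_int ((3) + (-6) * s + (3) * s^2 + (3) * t + (-3) * t * s^2 + (-3) * t^2 + (6) * t^2 * s + (-3) * t^3) (0) (0) (0) (0) (0) _ _ _ (fun r => by ring)]
    ring
  have e2 : ∀ t : ℝ, (∫ s in (1 : ℝ)..(1 + t), ((3) * s + (-6) * s^2 + (3) * s^3 + (-3) * t + (9) * t * s + (-3) * t * s^2 + (-3) * t * s^3 + (-3) * t^2 + (-3) * t^2 * s + (9) * t^2 * s^2 + (3) * t^3 + (-9) * t^3 * s + (3) * t^4)) = (1) * t^3 + (-7/4) * t^4 + (3/4) * t^5 := by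
    intro t
    rw [poly_int ((-3) * t + (-3) * t^2 + (3) * t^3 + (3) * t^4) ((3) + (9) * t + (-3) * t^2 + (-9) * t^3) ((-6) + (-3) * t + (9) * t^2) ((3) + (-3) * t) (0) (0) _ _ _ (fun s => by ring)]
    ring
  simp only [e1, e2]
  rw [poly_int (0) (0) (0) ((1)) ((-7/4)) ((3/4)) _ _ _ (fun t => by ring)]
  norm_num

/-- The computation `S(W^{E_l}_{•••}; E_C) = 154/405`. -/
theorem S_WEl_EC :
    4 * ((∫ p in DeltaA,
            (6 * p.2.2 * (1 - p.1 - p.2.2) * (p.2.1 - p.2.2) +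
              3 * (1 - p.1) * (p.2.1 - p.2.2) ^ 2)) +
         (∫ p in DeltaB, 3 * (1 - p.1) * (1 - p.1 + p.2.1 - 2 * p.2.2) ^ 2) +
         (∫ p in DeltaC1,
            (6 * (p.2.1 - p.1) * (1 - p.2.1) * p.1 + 3 * (1 - p.1) * p.1 ^ 2)) +
         (∫ p in DeltaC2, 3 * (1 - p.1) * (1 + p.1 - p.2.1) ^ 2)) = 154 / 405 := by
  rw [int_A, int_B, int_C1, int_C2]
  norm_num
end

section
/- Let Γ = {(t,s,r) ∈ ℝ³ : 0<t<1, −1+t+s−2r>0, ((0<s<1 and s+t>1 and r>1−t) or (1<s<1+t and r>s−t)), and 1−t+2s−2r>0}, and let Δ_A = {(t,s,r) : 0<t<1, 0<s<1, ((s<t and r>0) or (s>t and r>s−t)), ((s+t<1 and r<s) or (s+t>1 and r<1−t))}. Set Δ_{AA} = {(t,s,r,u) ∈ ℝ⁴ : (t,s,r) ∈ Δ_A, 1−t+2s−2r>0, 0<u<r} ∪ {(t,s,r,u) : (t,s,r) ∈ Γ, −1+t+r<u<r}, and Δ_{BB} = {(t,s,r,u) : (t,s,r) ∈ Γ, 0<u<−1+t+r}.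 With f_{AA} = 2(r−u)(1−t+2s−3r−u) and f_{BB} = 4(1−t)(1−t+s−2r), one has 12·(∫_{Δ_{AA}} f_{AA} + ∫_{Δ_{BB}} f_{BB}) = 221/2430, i.e. the sum of the two integrals equals 221/29160. -/
open MeasureTheory

/-- Region `Γ` in ℝ³, coordinates `(t, s, r)`. -/
def GammaR : Set (ℝ × ℝ × ℝ) :=
  {p | 0 < p.1 ∧ p.1 < 1 ∧ -1 + p.1 + p.2.1 - 2 * p.2.2 > 0 ∧
       ((0 < p.2.1 ∧ p.2.1 < 1 ∧ p.2.1 + p.1 > 1 ∧ p.2.2 > 1 - p.1) ∨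
        (1 < p.2.1 ∧ p.2.1 < 1 + p.1 ∧ p.2.2 > p.2.1 - p.1)) ∧
       1 - p.1 + 2 * p.2.1 - 2 * p.2.2 > 0}

/-- Region `Δ_{AA}` in ℝ⁴, coordinates `(t, s, r, u)`. -/
def DeltaAA : Set (ℝ × ℝ × ℝ × ℝ) :=
  {p | ((p.1, p.2.1, p.2.2.1) ∈ DeltaA ∧
          1 - p.1 + 2 * p.2.1 - 2 * p.2.2.1 > 0 ∧ 0 < p.2.2.2 ∧ p.2.2.2 < p.2.2.1) ∨
       ((p.1, p.2.1, p.2.2.1) ∈ GammaR ∧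
          -1 + p.1 + p.2.2.1 < p.2.2.2 ∧ p.2.2.2 < p.2.2.1)}

/-- Region `Δ_{BB}` in ℝ⁴, coordinates `(t, s, r, u)`. -/
def DeltaBB : Set (ℝ × ℝ × ℝ × ℝ) :=
  {p | (p.1, p.2.1, p.2.2.1) ∈ GammaR ∧ 0 < p.2.2.2 ∧ p.2.2.2 < -1 + p.1 + p.2.2.1}

lemma fub_step {Y : Type} [MeasureSpace Y] [SFinite (volume : Measure Y)]
    (f : ℝ × Y → ℝ) (R : Set (ℝ × Y)) (hR : MeasurableSet R) (hf : IntegrableOn f R)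
    (a b : ℝ) (hab : a ≤ b) (S : ℝ → Set Y)
    (hS : ∀ t y, (t, y) ∈ R ↔ (a < t ∧ t < b) ∧ y ∈ S t) (g : ℝ → ℝ)
    (hg : ∀ t, a < t → t < b → MeasurableSet (S t) → ∫ y in S t, f (t, y) = g t) :
    ∫ p in R, f p = ∫ t in a..b, g t := by
  rw [intervalIntegral.integral_of_le hab, integral_Ioc_eq_integral_Ioo,
    ← integral_indicator hR, ← integral_indicator measurableSet_Ioo,
    Measure.volume_eq_prod, integral_prod]
  · congr 1
    ext t
    by_cases ht : a < t ∧ t < b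
    · have hpre : Prod.mk t ⁻¹' R = S t := by
        ext y
        simp [hS, ht]
      have hm : MeasurableSet (S t) := by
        rw [← hpre]
        exact measurable_prodMk_left hR
      rw [Set.indicator_of_mem (show t ∈ Set.Ioo a b from ht), ← hg t ht.1 ht.2 hm,
        ← integral_indicator hm]
      congr 1
      ext y
      by_cases hy : y ∈ S t
      · rw [Set.indicator_of_mem hy, Set.indicator_of_mem ((hS t y).2 ⟨ht, hy⟩)]
      · rw [Set.indicator_of_notMem hy,
          Set.indicator_of_notMem (fun h => hy ((hS t y).1 h).2)]
    · rw [Set.indicator_of_notMem (show t ∉ Set.Ioo a b from ht)]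
      have : ∀ y, R.indicator f (t, y) = 0 := fun y =>
        Set.indicator_of_notMem (fun h => ht ((hS t y).1 h).1) _
      simp [this]
  · rw [← Measure.volume_eq_prod]
    exact (integrable_indicator_iff hR).2 hf

lemma quad (f : ℝ × ℝ × ℝ × ℝ → ℝ) (hf : Continuous f) (R : Set (ℝ × ℝ × ℝ × ℝ))
    (hR : MeasurableSet R) (hbox : R ⊆ Set.Icc (-3, -3, -3, -3) (3, 3, 3, 3))
    (a b : ℝ) (hab : a ≤ b)
    (c d : ℝ → ℝ) (hcd : ∀ t, a < t → t < b → c t ≤ d t)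
    (e g : ℝ → ℝ → ℝ) (heg : ∀ t s, a < t → t < b → c t < s → s < d t → e t s ≤ g t s)
    (h k : ℝ → ℝ → ℝ → ℝ) (hhk : ∀ t s r, a < t → t < b → c t < s → s < d t →
      e t s < r → r < g t s → h t s r ≤ k t s r)
    (hmem : ∀ t s r u, (t, s, r, u) ∈ R ↔ (a < t ∧ t < b) ∧ (c t < s ∧ s < d t) ∧
      (e t s < r ∧ r < g t s) ∧ (h t s r < u ∧ u < k t s r))
    (P1 : ℝ → ℝ → ℝ → ℝ) (P2 : ℝ → ℝ → ℝ) (P3 : ℝ → ℝ) (V : ℝ)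
    (i1 : ∀ t s r, ∫ u in (h t s r)..(k t s r), f (t, s, r, u) = P1 t s r)
    (i2 : ∀ t s, ∫ r in (e t s)..(g t s), P1 t s r = P2 t s)
    (i3 : ∀ t, ∫ s in (c t)..(d t), P2 t s = P3 t)
    (i4 : ∫ t in a..b, P3 t = V) :
    ∫ p in R, f p = V := by
  rw [← i4]
  refine fub_step f R hR ((hf.continuousOn.integrableOn_compact isCompact_Icc).mono_set hbox)
    a b hab (fun t => {y | (c t < y.1 ∧ y.1 < d t) ∧
      (e t y.1 < y.2.1 ∧ y.2.1 < g t y.1) ∧ (h t y.1 y.2.1 < y.2.2 ∧ y.2.2 < k t y.1 y.2.1)})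
    (fun t y => hmem t y.1 y.2.1 y.2.2) P3 ?_
  intro t t1 t2 hm
  rw [← i3]
  refine fub_step (fun y => f (t, y)) _ hm
    (((by fun_prop : Continuous fun y => f (t, y)).continuousOn.integrableOn_compact
      (isCompact_Icc (a := (-3, -3, -3)) (b := (3, 3, 3)))).mono_set ?_)
    (c t) (d t) (hcd t t1 t2) (fun s => {y | 
      (e t s < y.1 ∧ y.1 < g t s) ∧ (h t s y.1 < y.2 ∧ y.2 < k t s y.1)})
    (fun s y => Iff.rfl) (P2 t) ?_
  · intro y hy
    have := hbox ((hmem t y.1 y.2.1 y.2.2).2 ⟨⟨t1, t2⟩, hy⟩)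
    exact ⟨this.1.2, this.2.2⟩
  intro s s1 s2 hm2
  rw [← i2]
  refine fub_step (fun y => f (t, s, y)) _ hm2
    (((by fun_prop : Continuous fun y => f (t, s, y)).continuousOn.integrableOn_compact
      (isCompact_Icc (a := (-3, -3)) (b := (3, 3)))).mono_set ?_)
    (e t s) (g t s) (heg t s t1 t2 s1 s2) (fun r => Set.Ioo (h t s r) (k t s r))
    (fun s y => Iff.rfl) (P1 t s) ?_
  · intro y hy
    have := hbox ((hmem t s y.1 y.2).2 ⟨⟨t1, t2⟩, ⟨s1, s2⟩, hy⟩)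
    exact ⟨this.1.2.2, this.2.2.2⟩
  intro r r1 r2 _
  rw [← i1, intervalIntegral.integral_of_le (hhk t s r t1 t2 s1 s2 r1 r2),
    integral_Ioc_eq_integral_Ioo]

lemma poly5 (f : ℝ → ℝ) (c0 c1 c2 c3 c4 c5 a b v : ℝ)
    (hf : ∀ x, f x = c0 + c1 * x + c2 * x ^ 2 + c3 * x ^ 3 + c4 * x ^ 4 + c5 * x ^ 5)
    (hv : (c0 * b + c1 * b ^ 2 / 2 + c2 * b ^ 3 / 3 + c3 * b ^ 4 / 4 + c4 * b ^ 5 / 5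
        + c5 * b ^ 6 / 6) -
      (c0 * a + c1 * a ^ 2 / 2 + c2 * a ^ 3 / 3 + c3 * a ^ 4 / 4 + c4 * a ^ 5 / 5
        + c5 * a ^ 6 / 6) = v) :
    ∫ x in a..b, f x = v := by
  have hfe : f = fun x => c0 + c1 * x + c2 * x ^ 2 + c3 * x ^ 3 + c4 * x ^ 4 + c5 * x ^ 5 :=
    funext hf
  rw [← hv]
  refine intervalIntegral.integral_eq_sub_of_hasDerivAt
    (f := fun x => c0 * x + c1 * x ^ 2 / 2 + c2 * x ^ 3 / 3 + c3 * x ^ 4 / 4 + c4 * x ^ 5 / 5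
        + c5 * x ^ 6 / 6) (fun x _ => ?_) ?_
  · rw [hf]
    have h := ((((((hasDerivAt_id x).const_mul c0).add
      (((hasDerivAt_pow 2 x).const_mul c1).div_const 2)).add
      (((hasDerivAt_pow 3 x).const_mul c2).div_const 3)).add
      (((hasDerivAt_pow 4 x).const_mul c3).div_const 4)).add
      (((hasDerivAt_pow 5 x).const_mul c4).div_const 5)).add
      (((hasDerivAt_pow 6 x).const_mul c5).div_const 6)
    have h2 := h.congr_deriv (g' := c0 + c1 * x + c2 * x ^ 2 + c3 * x ^ 3 + c4 * x ^ 4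
      + c5 * x ^ 5) (by norm_num; ring)
    exact h2
  · rw [hfe]
    exact Continuous.intervalIntegrable (by fun_prop) _ _

def fA (p : ℝ × ℝ × ℝ × ℝ) : ℝ :=
  2 * (p.2.2.1 - p.2.2.2) * (1 - p.1 + 2 * p.2.1 - 3 * p.2.2.1 - p.2.2.2)

def fB (p : ℝ × ℝ × ℝ × ℝ) : ℝ :=
  4 * (1 - p.1) * (1 - p.1 + p.2.1 - 2 * p.2.2.1)

lemma cont_fA : Continuous fA := by
  unfold fA
  fun_prop

lemma cont_fB : Continuous fB := by
  unfold fB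
  fun_prop

lemma union_int (f : ℝ × ℝ × ℝ × ℝ → ℝ) (hf : Continuous f) (R S : Set (ℝ × ℝ × ℝ × ℝ))
    (hS : MeasurableSet S) (hd : Disjoint R S)
    (hbR : R ⊆ Set.Icc (-3, -3, -3, -3) (3, 3, 3, 3))
    (hbS : S ⊆ Set.Icc (-3, -3, -3, -3) (3, 3, 3, 3)) :
    ∫ p in R ∪ S, f p = (∫ p in R, f p) + ∫ p in S, f p :=
  setIntegral_union hd hS
    ((hf.continuousOn.integrableOn_compact isCompact_Icc).mono_set hbR)
    ((hf.continuousOn.integrableOn_compact isCompact_Icc).mono_set hbS)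

lemma ae_half : ∀ᵐ p : ℝ × ℝ × ℝ × ℝ, p.1 ≠ 1 / 2 := by
  rw [ae_iff, Measure.volume_eq_prod]
  have : {p : ℝ × ℝ × ℝ × ℝ | ¬ p.1 ≠ 1 / 2}
        = ({1 / 2} : Set ℝ) ×ˢ (Set.univ : Set (ℝ × ℝ × ℝ)) := by
      ext y
      simp
  rw [this, Measure.prod_prod]
  simp

def regA1 : Set (ℝ × ℝ × ℝ × ℝ) :=
  {p | (0 < p.1 ∧ p.1 < (1/2)) ∧ (0 < p.2.1 ∧ p.2.1 < (1)*p.1) ∧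
    (0 < p.2.2.1 ∧ p.2.2.1 < (1)*p.2.1) ∧
    (0 < p.2.2.2 ∧ p.2.2.2 < (1)*p.2.2.1)}

lemma measA1 : MeasurableSet regA1 := by
  apply IsOpen.measurableSet
  unfold regA1
  simp only [Set.ofPred_and]
  repeat' apply IsOpen.inter
  all_goals exact isOpen_lt (by fun_prop) (by fun_prop)

lemma boxA1 : regA1 ⊆ Set.Icc (-3, -3, -3, -3) (3, 3, 3, 3) := by
  rintro ⟨t, s, r, u⟩ ⟨⟨h1, h2⟩, ⟨h3, h4⟩, ⟨h5, h6⟩, h7, h8⟩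
  simp only at h1 h2 h3 h4 h5 h6 h7 h8
  refine ⟨⟨?_, ?_, ?_, ?_⟩, ⟨?_, ?_, ?_, ?_⟩⟩ <;> simp only <;> linarith

lemma intA1 : ∫ p in regA1, fA p = (1/4608) := by
  refine quad fA cont_fA regA1 measA1 boxA1 (0) ((1/2)) (by norm_num)
    (fun t => 0) (fun t => (1)*t) (fun t h1 h2 => by linarith)
    (fun t s => 0) (fun t s => (1)*s) (fun t s h1 h2 h3 h4 => by linarith)
    (fun t s r => 0) (fun t s r => (1)*r) (fun t s r h1 h2 h3 h4 h5 h6 => by linarith)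
    (fun t s r u => Iff.rfl)
    (fun t s r => (1)*r^2 + (-10/3)*r^3 + (2)*s*r^2 + (-1)*t*r^2)
    (fun t s => (1/3)*s^3 + (-1/6)*s^4 + (-1/3)*t*s^3)
    (fun t => (1/12)*t^4 + (-7/60)*t^5)
    _ ?_ ?_ ?_ ?_
  · intro t s r
    exact poly5 _ ((2)*r + (-6)*r^2 + (4)*s*r + (-2)*t*r) ((-2) + (4)*r + (-4)*s + (2)*t) ((2)) (0) (0) (0) _ _ _ (fun x => by simp only [fA]; ring) (by ring)
  · intro t s
    exact poly5 _ (0) (0) ((1) + (2)*s + (-1)*t) ((-10/3)) (0) (0) _ _ _ (fun x => by ring) (by ring)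
  · intro t
    exact poly5 _ (0) (0) (0) ((1/3) + (-1/3)*t) ((-1/6)) (0) _ _ _ (fun x => by ring) (by ring)
  · exact poly5 _ (0) (0) (0) (0) ((1/12)) ((-7/60)) _ _ _ (fun x => by ring) (by norm_num)

def regA2 : Set (ℝ × ℝ × ℝ × ℝ) :=
  {p | (0 < p.1 ∧ p.1 < (1/2)) ∧ ((1)*p.1 < p.2.1 ∧ p.2.1 < (1) + (-1)*p.1) ∧
    ((1)*p.2.1 + (-1)*p.1 < p.2.2.1 ∧ p.2.2.1 < (1)*p.2.1) ∧
    (0 < p.2.2.2 ∧ p.2.2.2 < (1)*p.2.2.1)}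

lemma measA2 : MeasurableSet regA2 := by
  apply IsOpen.measurableSet
  unfold regA2
  simp only [Set.ofPred_and]
  repeat' apply IsOpen.inter
  all_goals exact isOpen_lt (by fun_prop) (by fun_prop)

lemma boxA2 : regA2 ⊆ Set.Icc (-3, -3, -3, -3) (3, 3, 3, 3) := by
  rintro ⟨t, s, r, u⟩ ⟨⟨h1, h2⟩, ⟨h3, h4⟩, ⟨h5, h6⟩, h7, h8⟩
  simp only at h1 h2 h3 h4 h5 h6 h7 h8
  refine ⟨⟨?_, ?_, ?_, ?_⟩, ⟨?_, ?_, ?_, ?_⟩⟩ <;> simp only <;> linarith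

lemma intA2 : ∫ p in regA2, fA p = (1/576) := by
  refine quad fA cont_fA regA2 measA2 boxA2 (0) ((1/2)) (by norm_num)
    (fun t => (1)*t) (fun t => (1) + (-1)*t) (fun t h1 h2 => by linarith)
    (fun t s => (1)*s + (-1)*t) (fun t s => (1)*s) (fun t s h1 h2 h3 h4 => by linarith)
    (fun t s r => 0) (fun t s r => (1)*r) (fun t s r h1 h2 h3 h4 h5 h6 => by linarith)
    (fun t s r u => Iff.rfl)
    (fun t s r => (1)*r^2 + (-10/3)*r^3 + (2)*s*r^2 + (-1)*t*r^2)
    (fun t s => (1)*t*s^2 + (-4/3)*t*s^3 + (-1)*t^2*s + (2)*t^2*s^2 + (1/3)*t^3 + (-5/3)*t^3*s + (1/2)*t^4)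
    (fun t => (1/2)*t^2 + (-5/2)*t^3 + (25/6)*t^4 + (-7/3)*t^5)
    _ ?_ ?_ ?_ ?_
  · intro t s r
    exact poly5 _ ((2)*r + (-6)*r^2 + (4)*s*r + (-2)*t*r) ((-2) + (4)*r + (-4)*s + (2)*t) ((2)) (0) (0) (0) _ _ _ (fun x => by simp only [fA]; ring) (by ring)
  · intro t s
    exact poly5 _ (0) (0) ((1) + (2)*s + (-1)*t) ((-10/3)) (0) (0) _ _ _ (fun x => by ring) (by ring)
  · intro t
    exact poly5 _ ((1/3)*t^3 + (1/2)*t^4) ((-1)*t^2 + (-5/3)*t^3) ((1)*t + (2)*t^2) ((-4/3)*t) (0) (0) _ _ _ (fun x => by ring) (by ring)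
  · exact poly5 _ (0) (0) ((1/2)) ((-5/2)) ((25/6)) ((-7/3)) _ _ _ (fun x => by ring) (by norm_num)

def regA3 : Set (ℝ × ℝ × ℝ × ℝ) :=
  {p | (0 < p.1 ∧ p.1 < (1/2)) ∧ ((1) + (-1)*p.1 < p.2.1 ∧ p.2.1 < (1)) ∧
    ((1)*p.2.1 + (-1)*p.1 < p.2.2.1 ∧ p.2.2.1 < (1) + (-1)*p.1) ∧
    (0 < p.2.2.2 ∧ p.2.2.2 < (1)*p.2.2.1)}

lemma measA3 : MeasurableSet regA3 := by
  apply IsOpen.measurableSet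
  unfold regA3
  simp only [Set.ofPred_and]
  repeat' apply IsOpen.inter
  all_goals exact isOpen_lt (by fun_prop) (by fun_prop)

lemma boxA3 : regA3 ⊆ Set.Icc (-3, -3, -3, -3) (3, 3, 3, 3) := by
  rintro ⟨t, s, r, u⟩ ⟨⟨h1, h2⟩, ⟨h3, h4⟩, ⟨h5, h6⟩, h7, h8⟩
  simp only at h1 h2 h3 h4 h5 h6 h7 h8
  refine ⟨⟨?_, ?_, ?_, ?_⟩, ⟨?_, ?_, ?_, ?_⟩⟩ <;> simp only <;> linarith

lemma intA3 : ∫ p in regA3, fA p = (13/7680) := by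
  refine quad fA cont_fA regA3 measA3 boxA3 (0) ((1/2)) (by norm_num)
    (fun t => (1) + (-1)*t) (fun t => (1)) (fun t h1 h2 => by linarith)
    (fun t s => (1)*s + (-1)*t) (fun t s => (1) + (-1)*t) (fun t s h1 h2 h3 h4 => by linarith)
    (fun t s r => 0) (fun t s r => (1)*r) (fun t s r h1 h2 h3 h4 h5 h6 => by linarith)
    (fun t s r u => Iff.rfl)
    (fun t s r => (1)*r^2 + (-10/3)*r^3 + (2)*s*r^2 + (-1)*t*r^2)
    (fun t s => (-1/2) + (2/3)*s + (-1/3)*s^3 + (1/6)*s^4 + (2)*t + (-2)*t*s + (1)*t*s^2 + (-1)*t*s^3 + (-3)*t^2 + (1)*t^2*s + (2)*t^2*s^2 + (7/3)*t^3 + (-7/3)*t^3*s)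
    (fun t => (-1/6)*t^2 + (3/2)*t^3 + (-13/4)*t^4 + (127/60)*t^5)
    _ ?_ ?_ ?_ ?_
  · intro t s r
    exact poly5 _ ((2)*r + (-6)*r^2 + (4)*s*r + (-2)*t*r) ((-2) + (4)*r + (-4)*s + (2)*t) ((2)) (0) (0) (0) _ _ _ (fun x => by simp only [fA]; ring) (by ring)
  · intro t s
    exact poly5 _ (0) (0) ((1) + (2)*s + (-1)*t) ((-10/3)) (0) (0) _ _ _ (fun x => by ring) (by ring)
  · intro t
    exact poly5 _ ((-1/2) + (2)*t + (-3)*t^2 + (7/3)*t^3) ((2/3) + (-2)*t + (1)*t^2 + (-7/3)*t^3) ((1)*t + (2)*t^2) ((-1/3) + (-1)*t) ((1/6)) (0) _ _ _ (fun x => by ring) (by ring)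
  · exact poly5 _ (0) (0) ((-1/6)) ((3/2)) ((-13/4)) ((127/60)) _ _ _ (fun x => by ring) (by norm_num)

def regA4 : Set (ℝ × ℝ × ℝ × ℝ) :=
  {p | ((1/2) < p.1 ∧ p.1 < (1)) ∧ (0 < p.2.1 ∧ p.2.1 < (1) + (-1)*p.1) ∧
    (0 < p.2.2.1 ∧ p.2.2.1 < (1)*p.2.1) ∧
    (0 < p.2.2.2 ∧ p.2.2.2 < (1)*p.2.2.1)}

lemma measA4 : MeasurableSet regA4 := by
  apply IsOpen.measurableSet
  unfold regA4
  simp only [Set.ofPred_and]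
  repeat' apply IsOpen.inter
  all_goals exact isOpen_lt (by fun_prop) (by fun_prop)

lemma boxA4 : regA4 ⊆ Set.Icc (-3, -3, -3, -3) (3, 3, 3, 3) := by
  rintro ⟨t, s, r, u⟩ ⟨⟨h1, h2⟩, ⟨h3, h4⟩, ⟨h5, h6⟩, h7, h8⟩
  simp only at h1 h2 h3 h4 h5 h6 h7 h8
  refine ⟨⟨?_, ?_, ?_, ?_⟩, ⟨?_, ?_, ?_, ?_⟩⟩ <;> simp only <;> linarith

lemma intA4 : ∫ p in regA4, fA p = (1/7680) := by
  refine quad fA cont_fA regA4 measA4 boxA4 ((1/2)) ((1)) (by norm_num)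
    (fun t => 0) (fun t => (1) + (-1)*t) (fun t h1 h2 => by linarith)
    (fun t s => 0) (fun t s => (1)*s) (fun t s h1 h2 h3 h4 => by linarith)
    (fun t s r => 0) (fun t s r => (1)*r) (fun t s r h1 h2 h3 h4 h5 h6 => by linarith)
    (fun t s r u => Iff.rfl)
    (fun t s r => (1)*r^2 + (-10/3)*r^3 + (2)*s*r^2 + (-1)*t*r^2)
    (fun t s => (1/3)*s^3 + (-1/6)*s^4 + (-1/3)*t*s^3)
    (fun t => (1/20) + (-1/4)*t + (1/2)*t^2 + (-1/2)*t^3 + (1/4)*t^4 + (-1/20)*t^5)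
    _ ?_ ?_ ?_ ?_
  · intro t s r
    exact poly5 _ ((2)*r + (-6)*r^2 + (4)*s*r + (-2)*t*r) ((-2) + (4)*r + (-4)*s + (2)*t) ((2)) (0) (0) (0) _ _ _ (fun x => by simp only [fA]; ring) (by ring)
  · intro t s
    exact poly5 _ (0) (0) ((1) + (2)*s + (-1)*t) ((-10/3)) (0) (0) _ _ _ (fun x => by ring) (by ring)
  · intro t
    exact poly5 _ (0) (0) (0) ((1/3) + (-1/3)*t) ((-1/6)) (0) _ _ _ (fun x => by ring) (by ring)
  · exact poly5 _ ((1/20)) ((-1/4)) ((1/2)) ((-1/2)) ((1/4)) ((-1/20)) _ _ _ (fun x => by ring) (by norm_num)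

def regA5 : Set (ℝ × ℝ × ℝ × ℝ) :=
  {p | ((1/2) < p.1 ∧ p.1 < (1)) ∧ ((1) + (-1)*p.1 < p.2.1 ∧ p.2.1 < (1)*p.1) ∧
    (0 < p.2.2.1 ∧ p.2.2.1 < (1) + (-1)*p.1) ∧
    (0 < p.2.2.2 ∧ p.2.2.2 < (1)*p.2.2.1)}

lemma measA5 : MeasurableSet regA5 := by
  apply IsOpen.measurableSet
  unfold regA5
  simp only [Set.ofPred_and]
  repeat' apply IsOpen.inter
  all_goals exact isOpen_lt (by fun_prop) (by fun_prop)

lemma boxA5 : regA5 ⊆ Set.Icc (-3, -3, -3, -3) (3, 3, 3, 3) := by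
  rintro ⟨t, s, r, u⟩ ⟨⟨h1, h2⟩, ⟨h3, h4⟩, ⟨h5, h6⟩, h7, h8⟩
  simp only at h1 h2 h3 h4 h5 h6 h7 h8
  refine ⟨⟨?_, ?_, ?_, ?_⟩, ⟨?_, ?_, ?_, ?_⟩⟩ <;> simp only <;> linarith

lemma intA5 : ∫ p in regA5, fA p = (1/1920) := by
  refine quad fA cont_fA regA5 measA5 boxA5 ((1/2)) ((1)) (by norm_num)
    (fun t => (1) + (-1)*t) (fun t => (1)*t) (fun t h1 h2 => by linarith)
    (fun t s => 0) (fun t s => (1) + (-1)*t) (fun t s h1 h2 h3 h4 => by linarith)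
    (fun t s r => 0) (fun t s r => (1)*r) (fun t s r h1 h2 h3 h4 h5 h6 => by linarith)
    (fun t s r u => Iff.rfl)
    (fun t s r => (1)*r^2 + (-10/3)*r^3 + (2)*s*r^2 + (-1)*t*r^2)
    (fun t s => (-1/2) + (2/3)*s + (2)*t + (-2)*t*s + (-3)*t^2 + (2)*t^2*s + (2)*t^3 + (-2/3)*t^3*s + (-1/2)*t^4)
    (fun t => (1/6) + (-4/3)*t + (4)*t^2 + (-17/3)*t^3 + (23/6)*t^4 + (-1)*t^5)
    _ ?_ ?_ ?_ ?_
  · intro t s r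
    exact poly5 _ ((2)*r + (-6)*r^2 + (4)*s*r + (-2)*t*r) ((-2) + (4)*r + (-4)*s + (2)*t) ((2)) (0) (0) (0) _ _ _ (fun x => by simp only [fA]; ring) (by ring)
  · intro t s
    exact poly5 _ (0) (0) ((1) + (2)*s + (-1)*t) ((-10/3)) (0) (0) _ _ _ (fun x => by ring) (by ring)
  · intro t
    exact poly5 _ ((-1/2) + (2)*t + (-3)*t^2 + (2)*t^3 + (-1/2)*t^4) ((2/3) + (-2)*t + (2)*t^2 + (-2/3)*t^3) (0) (0) (0) (0) _ _ _ (fun x => by ring) (by ring)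
  · exact poly5 _ ((1/6)) ((-4/3)) ((4)) ((-17/3)) ((23/6)) ((-1)) _ _ _ (fun x => by ring) (by norm_num)

def regA6 : Set (ℝ × ℝ × ℝ × ℝ) :=
  {p | ((1/2) < p.1 ∧ p.1 < (1)) ∧ ((1)*p.1 < p.2.1 ∧ p.2.1 < (1)) ∧
    ((1)*p.2.1 + (-1)*p.1 < p.2.2.1 ∧ p.2.2.1 < (1) + (-1)*p.1) ∧
    (0 < p.2.2.2 ∧ p.2.2.2 < (1)*p.2.2.1)}

lemma measA6 : MeasurableSet regA6 := by
  apply IsOpen.measurableSet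
  unfold regA6
  simp only [Set.ofPred_and]
  repeat' apply IsOpen.inter
  all_goals exact isOpen_lt (by fun_prop) (by fun_prop)

lemma boxA6 : regA6 ⊆ Set.Icc (-3, -3, -3, -3) (3, 3, 3, 3) := by
  rintro ⟨t, s, r, u⟩ ⟨⟨h1, h2⟩, ⟨h3, h4⟩, ⟨h5, h6⟩, h7, h8⟩
  simp only at h1 h2 h3 h4 h5 h6 h7 h8
  refine ⟨⟨?_, ?_, ?_, ?_⟩, ⟨?_, ?_, ?_, ?_⟩⟩ <;> simp only <;> linarith

lemma intA6 : ∫ p in regA6, fA p = (29/23040) := by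
  refine quad fA cont_fA regA6 measA6 boxA6 ((1/2)) ((1)) (by norm_num)
    (fun t => (1)*t) (fun t => (1)) (fun t h1 h2 => by linarith)
    (fun t s => (1)*s + (-1)*t) (fun t s => (1) + (-1)*t) (fun t s h1 h2 h3 h4 => by linarith)
    (fun t s r => 0) (fun t s r => (1)*r) (fun t s r h1 h2 h3 h4 h5 h6 => by linarith)
    (fun t s r u => Iff.rfl)
    (fun t s r => (1)*r^2 + (-10/3)*r^3 + (2)*s*r^2 + (-1)*t*r^2)
    (fun t s => (-1/2) + (2/3)*s + (-1/3)*s^3 + (1/6)*s^4 + (2)*t + (-2)*t*s + (1)*t*s^2 + (-1)*t*s^3 + (-3)*t^2 + (1)*t^2*s + (2)*t^2*s^2 + (7/3)*t^3 + (-7/3)*t^3*s)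
    (fun t => (-13/60) + (19/12)*t + (-25/6)*t^2 + (31/6)*t^3 + (-37/12)*t^4 + (43/60)*t^5)
    _ ?_ ?_ ?_ ?_
  · intro t s r
    exact poly5 _ ((2)*r + (-6)*r^2 + (4)*s*r + (-2)*t*r) ((-2) + (4)*r + (-4)*s + (2)*t) ((2)) (0) (0) (0) _ _ _ (fun x => by simp only [fA]; ring) (by ring)
  · intro t s
    exact poly5 _ (0) (0) ((1) + (2)*s + (-1)*t) ((-10/3)) (0) (0) _ _ _ (fun x => by ring) (by ring)
  · intro t
    exact poly5 _ ((-1/2) + (2)*t + (-3)*t^2 + (7/3)*t^3) ((2/3) + (-2)*t + (1)*t^2 + (-7/3)*t^3) ((1)*t + (2)*t^2) ((-1/3) + (-1)*t) ((1/6)) (0) _ _ _ (fun x => by ring) (by ring)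
  · exact poly5 _ ((-13/60)) ((19/12)) ((-25/6)) ((31/6)) ((-37/12)) ((43/60)) _ _ _ (fun x => by ring) (by norm_num)

def regG1 : Set (ℝ × ℝ × ℝ × ℝ) :=
  {p | ((2/3) < p.1 ∧ p.1 < (1)) ∧ ((3) + (-3)*p.1 < p.2.1 ∧ p.2.1 < (1)) ∧
    ((1) + (-1)*p.1 < p.2.2.1 ∧ p.2.2.1 < (-1/2) + (1/2)*p.2.1 + (1/2)*p.1) ∧
    ((-1) + (1)*p.2.2.1 + (1)*p.1 < p.2.2.2 ∧ p.2.2.2 < (1)*p.2.2.1)}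

lemma measG1 : MeasurableSet regG1 := by
  apply IsOpen.measurableSet
  unfold regG1
  simp only [Set.ofPred_and]
  repeat' apply IsOpen.inter
  all_goals exact isOpen_lt (by fun_prop) (by fun_prop)

lemma boxG1 : regG1 ⊆ Set.Icc (-3, -3, -3, -3) (3, 3, 3, 3) := by
  rintro ⟨t, s, r, u⟩ ⟨⟨h1, h2⟩, ⟨h3, h4⟩, ⟨h5, h6⟩, h7, h8⟩
  simp only at h1 h2 h3 h4 h5 h6 h7 h8
  refine ⟨⟨?_, ?_, ?_, ?_⟩, ⟨?_, ?_, ?_, ?_⟩⟩ <;> simp only <;> linarith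

lemma intG1 : ∫ p in regG1, fA p = (17/58320) := by
  refine quad fA cont_fA regG1 measG1 boxG1 ((2/3)) ((1)) (by norm_num)
    (fun t => (3) + (-3)*t) (fun t => (1)) (fun t h1 h2 => by linarith)
    (fun t s => (1) + (-1)*t) (fun t s => (-1/2) + (1/2)*s + (1/2)*t) (fun t s h1 h2 h3 h4 => by linarith)
    (fun t s r => (-1) + (1)*r + (1)*t) (fun t s r => (1)*r) (fun t s r h1 h2 h3 h4 h5 h6 => by linarith)
    (fun t s r u => Iff.rfl)
    (fun t s r => (5/3) + (-4)*r + (2)*s + (-5)*t + (8)*t*r + (-4)*t*s + (5)*t^2 + (-4)*t^2*r + (2)*t^2*s + (-5/3)*t^3)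
    (fun t s => (-1) + (-7/6)*s + (1/2)*s^2 + (4)*t + (7/2)*t*s + (-1)*t*s^2 + (-6)*t^2 + (-7/2)*t^2*s + (1/2)*t^2*s^2 + (4)*t^3 + (7/6)*t^3*s + (-1)*t^4)
    (fun t => (7/3) + (-40/3)*t + (359/12)*t^2 + (-395/12)*t^3 + (71/4)*t^4 + (-15/4)*t^5)
    _ ?_ ?_ ?_ ?_
  · intro t s r
    exact poly5 _ ((2)*r + (-6)*r^2 + (4)*s*r + (-2)*t*r) ((-2) + (4)*r + (-4)*s + (2)*t) ((2)) (0) (0) (0) _ _ _ (fun x => by simp only [fA]; ring) (by ring)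
  · intro t s
    exact poly5 _ ((5/3) + (2)*s + (-5)*t + (-4)*t*s + (5)*t^2 + (2)*t^2*s + (-5/3)*t^3) ((-4) + (8)*t + (-4)*t^2) (0) (0) (0) (0) _ _ _ (fun x => by ring) (by ring)
  · intro t
    exact poly5 _ ((-1) + (4)*t + (-6)*t^2 + (4)*t^3 + (-1)*t^4) ((-7/6) + (7/2)*t + (-7/2)*t^2 + (7/6)*t^3) ((1/2) + (-1)*t + (1/2)*t^2) (0) (0) (0) _ _ _ (fun x => by ring) (by ring)
  · exact poly5 _ ((7/3)) ((-40/3)) ((359/12)) ((-395/12)) ((71/4)) ((-15/4)) _ _ _ (fun x => by ring) (by norm_num)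

def regG2 : Set (ℝ × ℝ × ℝ × ℝ) :=
  {p | ((2/3) < p.1 ∧ p.1 < (1)) ∧ ((1) < p.2.1 ∧ p.2.1 < (-1) + (3)*p.1) ∧
    ((1)*p.2.1 + (-1)*p.1 < p.2.2.1 ∧ p.2.2.1 < (-1/2) + (1/2)*p.2.1 + (1/2)*p.1) ∧
    ((-1) + (1)*p.2.2.1 + (1)*p.1 < p.2.2.2 ∧ p.2.2.2 < (1)*p.2.2.1)}

lemma measG2 : MeasurableSet regG2 := by
  apply IsOpen.measurableSet
  unfold regG2
  simp only [Set.ofPred_and]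
  repeat' apply IsOpen.inter
  all_goals exact isOpen_lt (by fun_prop) (by fun_prop)

lemma boxG2 : regG2 ⊆ Set.Icc (-3, -3, -3, -3) (3, 3, 3, 3) := by
  rintro ⟨t, s, r, u⟩ ⟨⟨h1, h2⟩, ⟨h3, h4⟩, ⟨h5, h6⟩, h7, h8⟩
  simp only at h1 h2 h3 h4 h5 h6 h7 h8
  refine ⟨⟨?_, ?_, ?_, ?_⟩, ⟨?_, ?_, ?_, ?_⟩⟩ <;> simp only <;> linarith

lemma intG2 : ∫ p in regG2, fA p = (17/58320) := by
  refine quad fA cont_fA regG2 measG2 boxG2 ((2/3)) ((1)) (by norm_num)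
    (fun t => (1)) (fun t => (-1) + (3)*t) (fun t h1 h2 => by linarith)
    (fun t s => (1)*s + (-1)*t) (fun t s => (-1/2) + (1/2)*s + (1/2)*t) (fun t s h1 h2 h3 h4 => by linarith)
    (fun t s r => (-1) + (1)*r + (1)*t) (fun t s r => (1)*r) (fun t s r h1 h2 h3 h4 h5 h6 => by linarith)
    (fun t s r u => Iff.rfl)
    (fun t s r => (5/3) + (-4)*r + (2)*s + (-5)*t + (8)*t*r + (-4)*t*s + (5)*t^2 + (-4)*t^2*r + (2)*t^2*s + (-5/3)*t^3)
    (fun t s => (-4/3) + (-5/6)*s + (1/2)*s^2 + (7)*t + (1/2)*t*s + (-1)*t*s^2 + (-11)*t^2 + (3/2)*t^2*s + (1/2)*t^2*s^2 + (19/3)*t^3 + (-7/6)*t^3*s + (-1)*t^4)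
    (fun t => (7/3) + (-40/3)*t + (359/12)*t^2 + (-395/12)*t^3 + (71/4)*t^4 + (-15/4)*t^5)
    _ ?_ ?_ ?_ ?_
  · intro t s r
    exact poly5 _ ((2)*r + (-6)*r^2 + (4)*s*r + (-2)*t*r) ((-2) + (4)*r + (-4)*s + (2)*t) ((2)) (0) (0) (0) _ _ _ (fun x => by simp only [fA]; ring) (by ring)
  · intro t s
    exact poly5 _ ((5/3) + (2)*s + (-5)*t + (-4)*t*s + (5)*t^2 + (2)*t^2*s + (-5/3)*t^3) ((-4) + (8)*t + (-4)*t^2) (0) (0) (0) (0) _ _ _ (fun x => by ring) (by ring)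
  · intro t
    exact poly5 _ ((-4/3) + (7)*t + (-11)*t^2 + (19/3)*t^3 + (-1)*t^4) ((-5/6) + (1/2)*t + (3/2)*t^2 + (-7/6)*t^3) ((1/2) + (-1)*t + (1/2)*t^2) (0) (0) (0) _ _ _ (fun x => by ring) (by ring)
  · exact poly5 _ ((7/3)) ((-40/3)) ((359/12)) ((-395/12)) ((71/4)) ((-15/4)) _ _ _ (fun x => by ring) (by norm_num)

def regB1 : Set (ℝ × ℝ × ℝ × ℝ) :=
  {p | ((2/3) < p.1 ∧ p.1 < (1)) ∧ ((3) + (-3)*p.1 < p.2.1 ∧ p.2.1 < (1)) ∧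
    ((1) + (-1)*p.1 < p.2.2.1 ∧ p.2.2.1 < (-1/2) + (1/2)*p.2.1 + (1/2)*p.1) ∧
    (0 < p.2.2.2 ∧ p.2.2.2 < (-1) + (1)*p.2.2.1 + (1)*p.1)}

lemma measB1 : MeasurableSet regB1 := by
  apply IsOpen.measurableSet
  unfold regB1
  simp only [Set.ofPred_and]
  repeat' apply IsOpen.inter
  all_goals exact isOpen_lt (by fun_prop) (by fun_prop)

lemma boxB1 : regB1 ⊆ Set.Icc (-3, -3, -3, -3) (3, 3, 3, 3) := by
  rintro ⟨t, s, r, u⟩ ⟨⟨h1, h2⟩, ⟨h3, h4⟩, ⟨h5, h6⟩, h7, h8⟩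
  simp only at h1 h2 h3 h4 h5 h6 h7 h8
  refine ⟨⟨?_, ?_, ?_, ?_⟩, ⟨?_, ?_, ?_, ?_⟩⟩ <;> simp only <;> linarith

lemma intB1 : ∫ p in regB1, fB p = (7/19440) := by
  refine quad fB cont_fB regB1 measB1 boxB1 ((2/3)) ((1)) (by norm_num)
    (fun t => (3) + (-3)*t) (fun t => (1)) (fun t h1 h2 => by linarith)
    (fun t s => (1) + (-1)*t) (fun t s => (-1/2) + (1/2)*s + (1/2)*t) (fun t s h1 h2 h3 h4 => by linarith)
    (fun t s r => 0) (fun t s r => (-1) + (1)*r + (1)*t) (fun t s r h1 h2 h3 h4 h5 h6 => by linarith)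
    (fun t s r u => Iff.rfl)
    (fun t s r => (-4) + (12)*r + (-8)*r^2 + (-4)*s + (4)*s*r + (12)*t + (-24)*t*r + (8)*t*r^2 + (8)*t*s + (-4)*t*s*r + (-12)*t^2 + (12)*t^2*r + (-4)*t^2*s + (4)*t^3)
    (fun t s => (9/2) + (-3/2)*s + (-1/2)*s^2 + (1/6)*s^3 + (-18)*t + (9/2)*t*s + (1)*t*s^2 + (-1/6)*t*s^3 + (27)*t^2 + (-9/2)*t^2*s + (-1/2)*t^2*s^2 + (-18)*t^3 + (3/2)*t^3*s + (9/2)*t^4)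
    (fun t => (-2) + (38/3)*t + (-95/3)*t^2 + (39)*t^3 + (-189/8)*t^4 + (45/8)*t^5)
    _ ?_ ?_ ?_ ?_
  · intro t s r
    exact poly5 _ ((4) + (-8)*r + (4)*s + (-8)*t + (8)*t*r + (-4)*t*s + (4)*t^2) (0) (0) (0) (0) (0) _ _ _ (fun x => by simp only [fB]; ring) (by ring)
  · intro t s
    exact poly5 _ ((-4) + (-4)*s + (12)*t + (8)*t*s + (-12)*t^2 + (-4)*t^2*s + (4)*t^3) ((12) + (4)*s + (-24)*t + (-4)*t*s + (12)*t^2) ((-8) + (8)*t) (0) (0) (0) _ _ _ (fun x => by ring) (by ring)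
  · intro t
    exact poly5 _ ((9/2) + (-18)*t + (27)*t^2 + (-18)*t^3 + (9/2)*t^4) ((-3/2) + (9/2)*t + (-9/2)*t^2 + (3/2)*t^3) ((-1/2) + (1)*t + (-1/2)*t^2) ((1/6) + (-1/6)*t) (0) (0) _ _ _ (fun x => by ring) (by ring)
  · exact poly5 _ ((-2)) ((38/3)) ((-95/3)) ((39)) ((-189/8)) ((45/8)) _ _ _ (fun x => by ring) (by norm_num)

def regB2 : Set (ℝ × ℝ × ℝ × ℝ) :=
  {p | ((2/3) < p.1 ∧ p.1 < (1)) ∧ ((1) < p.2.1 ∧ p.2.1 < (-1) + (3)*p.1) ∧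
    ((1)*p.2.1 + (-1)*p.1 < p.2.2.1 ∧ p.2.2.1 < (-1/2) + (1/2)*p.2.1 + (1/2)*p.1) ∧
    (0 < p.2.2.2 ∧ p.2.2.2 < (-1) + (1)*p.2.2.1 + (1)*p.1)}

lemma measB2 : MeasurableSet regB2 := by
  apply IsOpen.measurableSet
  unfold regB2
  simp only [Set.ofPred_and]
  repeat' apply IsOpen.inter
  all_goals exact isOpen_lt (by fun_prop) (by fun_prop)

lemma boxB2 : regB2 ⊆ Set.Icc (-3, -3, -3, -3) (3, 3, 3, 3) := by
  rintro ⟨t, s, r, u⟩ ⟨⟨h1, h2⟩, ⟨h3, h4⟩, ⟨h5, h6⟩, h7, h8⟩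
  simp only at h1 h2 h3 h4 h5 h6 h7 h8
  refine ⟨⟨?_, ?_, ?_, ?_⟩, ⟨?_, ?_, ?_, ?_⟩⟩ <;> simp only <;> linarith

lemma intB2 : ∫ p in regB2, fB p = (7/6480) := by
  refine quad fB cont_fB regB2 measB2 boxB2 ((2/3)) ((1)) (by norm_num)
    (fun t => (1)) (fun t => (-1) + (3)*t) (fun t h1 h2 => by linarith)
    (fun t s => (1)*s + (-1)*t) (fun t s => (-1/2) + (1/2)*s + (1/2)*t) (fun t s h1 h2 h3 h4 => by linarith)
    (fun t s r => 0) (fun t s r => (-1) + (1)*r + (1)*t) (fun t s r h1 h2 h3 h4 h5 h6 => by linarith)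
    (fun t s r u => Iff.rfl)
    (fun t s r => (-4) + (12)*r + (-8)*r^2 + (-4)*s + (4)*s*r + (12)*t + (-24)*t*r + (8)*t*r^2 + (8)*t*s + (-4)*t*s*r + (-12)*t^2 + (12)*t^2*r + (-4)*t^2*s + (4)*t^3)
    (fun t s => (23/6) + (1/2)*s + (-5/2)*s^2 + (5/6)*s^3 + (-58/3)*t + (13/2)*t*s + (1)*t*s^2 + (-5/6)*t*s^3 + (29)*t^2 + (-17/2)*t^2*s + (3/2)*t^2*s^2 + (-18)*t^3 + (3/2)*t^3*s + (9/2)*t^4)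
    (fun t => (-6) + (38)*t + (-95)*t^2 + (117)*t^3 + (-567/8)*t^4 + (135/8)*t^5)
    _ ?_ ?_ ?_ ?_
  · intro t s r
    exact poly5 _ ((4) + (-8)*r + (4)*s + (-8)*t + (8)*t*r + (-4)*t*s + (4)*t^2) (0) (0) (0) (0) (0) _ _ _ (fun x => by simp only [fB]; ring) (by ring)
  · intro t s
    exact poly5 _ ((-4) + (-4)*s + (12)*t + (8)*t*s + (-12)*t^2 + (-4)*t^2*s + (4)*t^3) ((12) + (4)*s + (-24)*t + (-4)*t*s + (12)*t^2) ((-8) + (8)*t) (0) (0) (0) _ _ _ (fun x => by ring) (by ring)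
  · intro t
    exact poly5 _ ((23/6) + (-58/3)*t + (29)*t^2 + (-18)*t^3 + (9/2)*t^4) ((1/2) + (13/2)*t + (-17/2)*t^2 + (3/2)*t^3) ((-5/2) + (1)*t + (3/2)*t^2) ((5/6) + (-5/6)*t) (0) (0) _ _ _ (fun x => by ring) (by ring)
  · exact poly5 _ ((-6)) ((38)) ((-95)) ((117)) ((-567/8)) ((135/8)) _ _ _ (fun x => by ring) (by norm_num)

lemma mem_AA (t s r u : ℝ) (h1 : t ≠ 1 / 2) :
    (t, s, r, u) ∈ DeltaAA ↔ (t, s, r, u) ∈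
      regA1 ∪ (regA2 ∪ (regA3 ∪ (regA4 ∪ (regA5 ∪ (regA6 ∪ (regG1 ∪ regG2)))))) := by
  simp only [DeltaAA, DeltaA, GammaR, regA1, regA2, regA3, regA4, regA5, regA6, regG1, regG2,
    Set.mem_union, Set.mem_ofPred_eq]
  constructor
  · rintro (⟨⟨a1, a2, a3, a4, b, c⟩, d, e, f⟩ | ⟨⟨a1, a2, a3, b, c⟩, d, e⟩)
    · rcases lt_or_gt_of_ne h1 with h1 | h1 <;> rcases b with ⟨b, b'⟩ | ⟨b, b'⟩ <;>
        rcases c with ⟨c, c'⟩ | ⟨c, c'⟩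
      · left; refine ⟨⟨?_, ?_⟩, ⟨?_, ?_⟩, ⟨?_, ?_⟩, ?_, ?_⟩ <;> linarith
      · exfalso; linarith
      · right; left; refine ⟨⟨?_, ?_⟩, ⟨?_, ?_⟩, ⟨?_, ?_⟩, ?_, ?_⟩ <;> linarith
      · right; right; left; refine ⟨⟨?_, ?_⟩, ⟨?_, ?_⟩, ⟨?_, ?_⟩, ?_, ?_⟩ <;> linarith
      · right; right; right; left
        refine ⟨⟨?_, ?_⟩, ⟨?_, ?_⟩, ⟨?_, ?_⟩, ?_, ?_⟩ <;> linarith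
      · right; right; right; right; left
        refine ⟨⟨?_, ?_⟩, ⟨?_, ?_⟩, ⟨?_, ?_⟩, ?_, ?_⟩ <;> linarith
      · exfalso; linarith
      · right; right; right; right; right; left
        refine ⟨⟨?_, ?_⟩, ⟨?_, ?_⟩, ⟨?_, ?_⟩, ?_, ?_⟩ <;> linarith
    · rcases b with ⟨b1, b2, b3, b4⟩ | ⟨b1, b2, b3⟩
      · right; right; right; right; right; right; left
        refine ⟨⟨?_, ?_⟩, ⟨?_, ?_⟩, ⟨?_, ?_⟩, ?_, ?_⟩ <;> linarith
      · right; right; right; right; right; right; right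
        refine ⟨⟨?_, ?_⟩, ⟨?_, ?_⟩, ⟨?_, ?_⟩, ?_, ?_⟩ <;> linarith
  · rintro (h | h | h | h | h | h | h | h) <;>
      obtain ⟨⟨a1, a2⟩, ⟨a3, a4⟩, ⟨a5, a6⟩, a7, a8⟩ := h
    · left
      refine ⟨⟨?_, ?_, ?_, ?_, Or.inl ⟨?_, ?_⟩, Or.inl ⟨?_, ?_⟩⟩, ?_, ?_, ?_⟩ <;> linarith
    · left
      refine ⟨⟨?_, ?_, ?_, ?_, Or.inr ⟨?_, ?_⟩, Or.inl ⟨?_, ?_⟩⟩, ?_, ?_, ?_⟩ <;> linarith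
    · left
      refine ⟨⟨?_, ?_, ?_, ?_, Or.inr ⟨?_, ?_⟩, Or.inr ⟨?_, ?_⟩⟩, ?_, ?_, ?_⟩ <;> linarith
    · left
      refine ⟨⟨?_, ?_, ?_, ?_, Or.inl ⟨?_, ?_⟩, Or.inl ⟨?_, ?_⟩⟩, ?_, ?_, ?_⟩ <;> linarith
    · left
      refine ⟨⟨?_, ?_, ?_, ?_, Or.inl ⟨?_, ?_⟩, Or.inr ⟨?_, ?_⟩⟩, ?_, ?_, ?_⟩ <;> linarith
    · left
      refine ⟨⟨?_, ?_, ?_, ?_, Or.inr ⟨?_, ?_⟩, Or.inr ⟨?_, ?_⟩⟩, ?_, ?_, ?_⟩ <;> linarith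
    · right
      refine ⟨⟨?_, ?_, ?_, Or.inl ⟨?_, ?_, ?_, ?_⟩, ?_⟩, ?_, ?_⟩ <;> linarith
    · right
      refine ⟨⟨?_, ?_, ?_, Or.inr ⟨?_, ?_, ?_⟩, ?_⟩, ?_, ?_⟩ <;> linarith

lemma mem_BB (t s r u : ℝ) : (t, s, r, u) ∈ DeltaBB ↔ (t, s, r, u) ∈ regB1 ∪ regB2 := by
  simp only [DeltaBB, GammaR, regB1, regB2, Set.mem_union, Set.mem_ofPred_eq]
  constructor
  · rintro ⟨⟨a1, a2, a3, b, c⟩, d, e⟩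
    rcases b with ⟨b1, b2, b3, b4⟩ | ⟨b1, b2, b3⟩
    · left
      refine ⟨⟨?_, ?_⟩, ⟨?_, ?_⟩, ⟨?_, ?_⟩, ?_, ?_⟩ <;> linarith
    · right
      refine ⟨⟨?_, ?_⟩, ⟨?_, ?_⟩, ⟨?_, ?_⟩, ?_, ?_⟩ <;> linarith
  · rintro (h | h) <;>
      obtain ⟨⟨a1, a2⟩, ⟨a3, a4⟩, ⟨a5, a6⟩, a7, a8⟩ := h
    · refine ⟨⟨?_, ?_, ?_, Or.inl ⟨?_, ?_, ?_, ?_⟩, ?_⟩, ?_, ?_⟩ <;> linarith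
    · refine ⟨⟨?_, ?_, ?_, Or.inr ⟨?_, ?_, ?_⟩, ?_⟩, ?_, ?_⟩ <;> linarith

lemma intAA : ∫ p in DeltaAA, fA p = 1/4608 + (1/576 + (13/7680 + (1/7680 + (1/1920 + (29/23040
    + (17/58320 + 17/58320)))))) := by
  have hae : DeltaAA =ᵐ[volume]
      (regA1 ∪ (regA2 ∪ (regA3 ∪ (regA4 ∪ (regA5 ∪ (regA6 ∪ (regG1 ∪ regG2)))))) :
        Set (ℝ × ℝ × ℝ × ℝ)) := by
    filter_upwards [ae_half] with p h1
    exact propext (mem_AA p.1 p.2.1 p.2.2.1 p.2.2.2 h1)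
  have m7 := measG1.union measG2
  have m6 := measA6.union m7
  have m5 := measA5.union m6
  have m4 := measA4.union m5
  have m3 := measA3.union m4
  have m2 := measA2.union m3
  have b7 := Set.union_subset boxG1 boxG2
  have b6 := Set.union_subset boxA6 b7
  have b5 := Set.union_subset boxA5 b6
  have b4 := Set.union_subset boxA4 b5
  have b3 := Set.union_subset boxA3 b4
  have b2 := Set.union_subset boxA2 b3
  rw [setIntegral_congr_set hae, union_int fA cont_fA _ _ m2 ?_ boxA1 b2,
    union_int fA cont_fA _ _ m3 ?_ boxA2 b3, union_int fA cont_fA _ _ m4 ?_ boxA3 b4,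
    union_int fA cont_fA _ _ m5 ?_ boxA4 b5, union_int fA cont_fA _ _ m6 ?_ boxA5 b6,
    union_int fA cont_fA _ _ m7 ?_ boxA6 b7, union_int fA cont_fA _ _ measG2 ?_ boxG1 boxG2,
    intA1, intA2, intA3, intA4, intA5, intA6, intG1, intG2]
  all_goals
    rw [Set.disjoint_left]
    rintro ⟨t, s, r, u⟩ h h'
    simp only [regA1, regA2, regA3, regA4, regA5, regA6, regG1, regG2,
      Set.mem_union, Set.mem_ofPred_eq] at h h'
    obtain ⟨⟨a1, a2⟩, ⟨a3, a4⟩, ⟨a5, a6⟩, a7, a8⟩ := h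
    (try casesm* _ ∨ _) <;> casesm* _ ∧ _ <;> linarith

lemma intBB : ∫ p in DeltaBB, fB p = 7/19440 + 7/6480 := by
  have hE : DeltaBB = regB1 ∪ regB2 := by
    ext ⟨t, s, r, u⟩
    exact mem_BB t s r u
  rw [hE, union_int fB cont_fB _ _ measB2 ?_ boxB1 boxB2, intB1, intB2]
  rw [Set.disjoint_left]
  rintro ⟨t, s, r, u⟩ h h'
  simp only [regB1, regB2, Set.mem_ofPred_eq] at h h'
  linarith [h.2.1.2, h'.2.1.1]

/-- The computation `S(W^{E_C}_{••••}; C̃) = 221/2430`. -/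
theorem S_WEC_Ctilde :
    12 * ((∫ p in DeltaAA,
            2 * (p.2.2.1 - p.2.2.2) *
              (1 - p.1 + 2 * p.2.1 - 3 * p.2.2.1 - p.2.2.2)) +
          (∫ p in DeltaBB,
            4 * (1 - p.1) * (1 - p.1 + p.2.1 - 2 * p.2.2.1))) = 221 / 2430 := by
  have hA := intAA
  have hB := intBB
  simp only [fA, fB] at hA hB
  rw [hA, hB]
  norm_num
end

section
/- Define g₄ : [0,2] → ℝ by g₄(u) = (2−u)³ − 9(2−u)(1−u)² + 10(1−u)³ for 0 ≤ u ≤ 1 and g₄(u) = (2−u)³ for 1 ≤ u ≤ 2. Then there exists a unique real number ξ₀ such that ∫₀² (3u−2)·e^{−(3u−2)ξ₀}·g₄(u) du = 0; moreover 0.168 < ξ₀ < 0.169. -/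
open MeasureTheory intervalIntegral

/-- The volume function `g₄(u) = vol(π*O(1) − u E_S)` on the blow-up of the quintic
Del Pezzo fourfold `M₄` along the non-vertex-type plane `S`. -/
noncomputable def gFour (u : ℝ) : ℝ :=
  if u ≤ 1 then (2 - u) ^ 3 - 9 * (2 - u) * (1 - u) ^ 2 + 10 * (1 - u) ^ 3
  else (2 - u) ^ 3

lemma gF_le {u : ℝ} (h : u ≤ 1) : gFour u = 38/27 + 3/27*(3*u-2) + (-12/27)*(3*u-2)^2
    + (-2/27)*(3*u-2)^3 := by
  unfold gFour; rw [if_pos h]; ring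

lemma gF_ge {u : ℝ} (h : 1 ≤ u) : gFour u = 64/27 + (-48/27)*(3*u-2) + (12/27)*(3*u-2)^2
    + (-1/27)*(3*u-2)^3 := by
  rcases h.eq_or_lt with rfl | h
  · rw [gF_le le_rfl]; norm_num
  · unfold gFour; rw [if_neg (not_le.2 h)]; ring

lemma gF_cont : Continuous gFour := by
  unfold gFour
  refine Continuous.if_le (by fun_prop) (by fun_prop) (by fun_prop) (by fun_prop) ?_
  intro x hx
  subst hx
  norm_num

lemma gF_bd {u : ℝ} (h0 : 0 ≤ u) (h2 : u ≤ 2) : 0 ≤ gFour u ∧ gFour u ≤ 3 := by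
  rcases le_total u 1 with h | h
  · have e : gFour u = u * (3 - 2*u^2) := by
      rw [gF_le h]; ring
    rw [e]
    have : u^2 ≤ 1 := by nlinarith
    constructor
    · apply mul_nonneg h0; linarith
    · nlinarith [mul_nonneg h0 (sq_nonneg u)]
  · have e : gFour u = (2-u)^3 := by rw [gF_ge h]; ring
    rw [e]
    have h3 : 0 ≤ 2 - u := by linarith
    constructor
    · positivity
    · have : (2-u)^3 ≤ 1 := pow_le_one₀ h3 (by linarith)
      linarith

noncomputable def antiA (ξ c0 c1 c2 c3 p : ℝ) : ℝ :=
  ∑ i ∈ Finset.range 8, (-ξ)^i / (i.factorial : ℝ) *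
    (c0 * p^(i+2)/(3*(i+2)) + c1 * p^(i+3)/(3*(i+3)) + c2 * p^(i+4)/(3*(i+4))
      + c3 * p^(i+5)/(3*(i+5)))

lemma anti_deriv (ξ c0 c1 c2 c3 u : ℝ) :
    HasDerivAt (fun u : ℝ => antiA ξ c0 c1 c2 c3 (3*u-2))
      ((3*u-2) * (∑ i ∈ Finset.range 8, (-(3*u-2)*ξ)^i / (i.factorial : ℝ)) *
        (c0 + c1*(3*u-2) + c2*(3*u-2)^2 + c3*(3*u-2)^3)) u := by
  have hp : HasDerivAt (fun u : ℝ => 3*u-2) 3 u := by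
    simpa using ((hasDerivAt_id u).const_mul 3).sub_const 2
  have key : ∀ (c : ℝ) (n : ℕ), HasDerivAt (fun u : ℝ => c * (3*u-2)^(n+1)/(3*((n:ℝ)+1)))
      (c * (3*u-2)^n) u := by
    intro c n
    have := ((hp.pow (n+1)).const_mul c).div_const (3*((n:ℝ)+1))
    refine HasDerivAt.congr_deriv this ?_
    have : (n:ℝ)+1 ≠ 0 := by positivity
    rw [Nat.add_sub_cancel]
    push_cast
    field_simp
  unfold antiA
  rw [Finset.mul_sum, Finset.sum_mul]
  apply HasDerivAt.fun_sum
  intro i _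
  have h2 := key c0 (i+1)
  have h3 := key c1 (i+2)
  have h4 := key c2 (i+3)
  have h5 := key c3 (i+4)
  have := (((h2.add h3).add h4).add h5).const_mul ((-ξ)^i / (i.factorial : ℝ))
  have e : (-ξ)^i / (i.factorial : ℝ) * (c0 * (3*u-2)^(i+1) + c1 * (3*u-2)^(i+2)
      + c2 * (3*u-2)^(i+3) + c3 * (3*u-2)^(i+4)) =
      (3*u-2) * ((-(3*u-2)*ξ)^i / (i.factorial : ℝ)) *
        (c0 + c1*(3*u-2) + c2*(3*u-2)^2 + c3*(3*u-2)^3) := by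
    rw [show (-(3*u-2)*ξ) = (-ξ)*(3*u-2) by ring, mul_pow]
    ring
  refine (HasDerivAt.congr_deriv this e).congr_of_eventuallyEq (Filter.Eventually.of_forall ?_)
  intro v
  simp only [Pi.add_apply]
  push_cast
  ring_nf

lemma anti_int (ξ c0 c1 c2 c3 a b : ℝ) :
    ∫ u in a..b, ((3*u-2) * (∑ i ∈ Finset.range 8, (-(3*u-2)*ξ)^i / (i.factorial : ℝ)) *
        (c0 + c1*(3*u-2) + c2*(3*u-2)^2 + c3*(3*u-2)^3)) =
    antiA ξ c0 c1 c2 c3 (3*b-2) - antiA ξ c0 c1 c2 c3 (3*a-2) := by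
  apply intervalIntegral.integral_eq_sub_of_hasDerivAt
  · intro u _
    exact anti_deriv ξ c0 c1 c2 c3 u
  · apply Continuous.intervalIntegrable
    fun_prop

noncomputable def FF (ξ : ℝ) : ℝ :=
  ∫ u in (0:ℝ)..2, (3 * u - 2) * Real.exp (-(3 * u - 2) * ξ) * gFour u

lemma int_taylor (ξ : ℝ) :
    ∫ u in (0:ℝ)..2, (3*u-2) * (∑ i ∈ Finset.range 8, (-(3*u-2)*ξ)^i / (i.factorial : ℝ))
      * gFour u =
    (antiA ξ (38/27) (3/27) (-12/27) (-2/27) 1 - antiA ξ (38/27) (3/27) (-12/27) (-2/27) (-2)) +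
    (antiA ξ (64/27) (-48/27) (12/27) (-1/27) 4 - antiA ξ (64/27) (-48/27) (12/27) (-1/27) 1) := by
  have hc : Continuous (fun u : ℝ => (3*u-2) *
    (∑ i ∈ Finset.range 8, (-(3*u-2)*ξ)^i / (i.factorial : ℝ)) * gFour u) := by
    have := gF_cont
    fun_prop
  rw [← intervalIntegral.integral_add_adjacent_intervals (b := 1)
    (hc.intervalIntegrable _ _) (hc.intervalIntegrable _ _)]
  congr 1
  · have := anti_int ξ (38/27) (3/27) (-12/27) (-2/27) 0 1
    norm_num only at this ⊢
    rw [← this]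
    apply intervalIntegral.integral_congr
    intro u hu
    rw [Set.uIcc_of_le (by norm_num)] at hu
    simp only
    rw [gF_le hu.2]
    norm_num only
  · have := anti_int ξ (64/27) (-48/27) (12/27) (-1/27) 1 2
    norm_num only at this ⊢
    rw [← this]
    apply intervalIntegral.integral_congr
    intro u hu
    rw [Set.uIcc_of_le (by norm_num)] at hu
    simp only
    rw [gF_ge hu.1]
    norm_num only

lemma FF_approx {ξ : ℝ} (h0 : 0 ≤ ξ) (h1 : ξ ≤ 0.169) :
    |FF ξ - ∫ u in (0:ℝ)..2, (3*u-2) *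
      (∑ i ∈ Finset.range 8, (-(3*u-2)*ξ)^i / (i.factorial : ℝ)) * gFour u| ≤ 0.00004 := by
  have hg := gF_cont
  unfold FF
  rw [← intervalIntegral.integral_sub
    (Continuous.intervalIntegrable (by fun_prop) _ _)
    (Continuous.intervalIntegrable (by fun_prop) _ _)]
  have := intervalIntegral.norm_integral_le_of_norm_le_const (a := 0) (b := 2) (C := 0.00002)
    (f := fun u : ℝ => (3 * u - 2) * Real.exp (-(3 * u - 2) * ξ) * gFour u - (3*u-2) *
      (∑ i ∈ Finset.range 8, (-(3*u-2)*ξ)^i / (i.factorial : ℝ)) * gFour u) ?_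
  · rw [Real.norm_eq_abs] at this
    refine this.trans ?_
    norm_num
  · intro u hu
    rw [Set.uIoc_of_le (by norm_num)] at hu
    obtain ⟨g0, g3⟩ := gF_bd hu.1.le hu.2
    have hp : |3*u-2| ≤ 4 := by
      rw [abs_le]; constructor <;> linarith [hu.1, hu.2]
    have ht : |(-(3*u-2)*ξ)| ≤ 0.676 := by
      rw [abs_mul, abs_neg, abs_of_nonneg h0]
      calc |3*u-2| * ξ ≤ 4 * 0.169 := by gcongr
        _ = 0.676 := by norm_num
    have hb := Real.exp_bound (ht.trans (by norm_num)) (n := 8) (by norm_num)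
    have hb2 : |(-(3*u-2)*ξ)|^8 * (((8:ℕ).succ : ℝ) / (((8:ℕ).factorial : ℝ) * (8:ℕ)))
        ≤ 0.0000015 := by
      calc _ ≤ (0.676:ℝ)^8 * (((8:ℕ).succ : ℝ) / (((8:ℕ).factorial : ℝ) * (8:ℕ))) := by gcongr
        _ ≤ _ := by norm_num [Nat.factorial]
    have hb3 := hb.trans hb2
    rw [Real.norm_eq_abs, ← sub_mul, ← mul_sub, abs_mul, abs_mul, abs_of_nonneg g0]
    calc _ ≤ 4 * 0.0000015 * (3:ℝ) := by gcongr
      _ ≤ _ := by norm_num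

lemma FF_lo : 0 < FF 0.168 := by
  have h := FF_approx (ξ := 0.168) (by norm_num) (by norm_num)
  rw [int_taylor, abs_le] at h
  have := h.1
  norm_num [antiA, Finset.sum_range_succ, Nat.factorial] at this ⊢
  linarith

lemma FF_hi : FF 0.169 < 0 := by
  have h := FF_approx (ξ := 0.169) (by norm_num) (by norm_num)
  rw [int_taylor, abs_le] at h
  have := h.2
  norm_num [antiA, Finset.sum_range_succ, Nat.factorial] at this ⊢
  linarith

lemma FF_cont : Continuous FF := by
  have hg := gF_cont
  unfold FF
  apply intervalIntegral.continuous_parametric_intervalIntegral_of_continuous'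
  unfold Function.uncurry
  fun_prop

lemma FF_anti : StrictAnti FF := by
  intro x y hxy
  have hg := gF_cont
  unfold FF
  apply intervalIntegral.integral_lt_integral_of_continuousOn_of_le_of_exists_lt (by norm_num)
  · apply Continuous.continuousOn; fun_prop
  · apply Continuous.continuousOn; fun_prop
  · intro u hu
    apply mul_le_mul_of_nonneg_right _ (gF_bd hu.1.le hu.2).1
    rcases le_total 0 (3*u-2) with h | h
    · apply mul_le_mul_of_nonneg_left _ h
      apply Real.exp_le_exp.2; nlinarith
    · apply mul_le_mul_of_nonpos_left _ h
      apply Real.exp_le_exp.2; nlinarith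
  · refine ⟨1, by norm_num, ?_⟩
    have : gFour 1 = 1 := by norm_num [gFour]
    rw [this]
    norm_num
    exact hxy

/-- There is a unique real number `ξ₀` with
`∫₀² (3u−2)·e^{−(3u−2)ξ₀}·g₄(u) du = 0`, and it satisfies `0.168 < ξ₀ < 0.169`.
This `ξ₀` is the soliton candidate on `M₄`. -/
theorem soliton_candidate_M4 :
    ∃ ξ₀ : ℝ,
      (∫ u in (0:ℝ)..2, (3 * u - 2) * Real.exp (-(3 * u - 2) * ξ₀) * gFour u) = 0 ∧
      0.168 < ξ₀ ∧ ξ₀ < 0.169 ∧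
      ∀ ξ : ℝ,
        (∫ u in (0:ℝ)..2, (3 * u - 2) * Real.exp (-(3 * u - 2) * ξ) * gFour u) = 0 →
          ξ = ξ₀ := by
  obtain ⟨z, hz, hz0⟩ := intermediate_value_Ioo' (by norm_num : (0.168:ℝ) ≤ 0.169)
    FF_cont.continuousOn (⟨FF_hi, FF_lo⟩ : (0:ℝ) ∈ Set.Ioo (FF 0.169) (FF 0.168))
  refine ⟨z, hz0, hz.1, hz.2, fun ξ hξ => ?_⟩
  exact FF_anti.injective (Eq.trans hξ hz0.symm)
end

section
/- Define V(t,s) for 0 ≤ t ≤ 1 and 0 ≤ s ≤ 1+t by: V(t,s) = 4(1−t)((1−t)²t + 3(1−t)t² + 2t³ − s³) for 0 ≤ s ≤ t; V(t,s) = 4(s−t)(3(1−s)²t + 3(1−s)t² + t³) + 4(1−s)t((1−s)² + 3(1−s)t + t²) for t ≤ s ≤ 1; V(t,s) = 4(1−t)(1+t−s)³ for 1 ≤ s ≤ 1+t, and let g₅(t) = 4t − 4t³. Then for every real number ξ satisfying ∫₀¹ (4t−2)e^{−(4t−2)ξ} g₅(t) dt = 0, one has ∫₀¹ e^{−(4t−2)ξ}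 (∫₀^{1+t} V(t,s) ds) dt = (3/4)·∫₀¹ e^{−(4t−2)ξ} g₅(t) dt. -/
open MeasureTheory intervalIntegral

/-- The volume function `g₅(t) = 4t − 4t³`. -/
noncomputable def gFive (t : ℝ) : ℝ := 4 * t - 4 * t ^ 3

theorem inner_VolEW (t : ℝ) (h0 : 0 ≤ t) (h1 : t ≤ 1) :
    (∫ s in (0:ℝ)..(1 + t), VolEW t s) = gFive t * (1 + t) / 2 := by
  have e1 : Set.EqOn (fun s : ℝ => 4 * (1 - t) * (t + t ^ 2 - s ^ 3)) (VolEW t)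
      (Set.uIoc 0 t) := by
    intro s hs
    rw [Set.uIoc_of_le h0] at hs
    simp only [VolEW, if_pos hs.2]
    ring
  have e2 : Set.EqOn (fun s : ℝ => 4 * t * ((1 - t) * (3 * (1 - s) ^ 2 + 3 * t * (1 - s) + t ^ 2)
      - 2 * (1 - s) ^ 3)) (VolEW t) (Set.uIoc t 1) := by
    intro s hs
    rw [Set.uIoc_of_le h1] at hs
    simp only [VolEW, if_neg (not_le.2 hs.1), if_pos hs.2]
    ring
  have e3 : Set.EqOn (fun s : ℝ => 4 * (1 - t) * (1 + t - s) ^ 3) (VolEW t)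
      (Set.uIoc 1 (1 + t)) := by
    intro s hs
    rw [Set.uIoc_of_le (by linarith)] at hs
    simp only [VolEW, if_neg (not_le.2 (lt_of_le_of_lt h1 hs.1)), if_neg (not_le.2 hs.1)]
  have i1 : IntervalIntegrable (VolEW t) volume 0 t :=
    (Continuous.intervalIntegrable (by fun_prop) _ _).congr e1
  have i2 : IntervalIntegrable (VolEW t) volume t 1 :=
    (Continuous.intervalIntegrable (by fun_prop) _ _).congr e2
  have i3 : IntervalIntegrable (VolEW t) volume 1 (1 + t) :=
    (Continuous.intervalIntegrable (by fun_prop) _ _).congr e3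
  have c : ∀ (a b : ℝ) (f F : ℝ → ℝ), Set.EqOn f (VolEW t) (Set.uIoc a b) → Continuous f →
      (∀ x, HasDerivAt F (f x) x) → (∫ s in a..b, VolEW t s) = F b - F a := by
    intro a b f F he hc hF
    rw [← integral_eq_sub_of_hasDerivAt (fun x _ => hF x) (hc.intervalIntegrable _ _)]
    exact integral_congr_ae (Filter.Eventually.of_forall fun x hx => (he hx).symm)
  rw [← integral_add_adjacent_intervals (i1.trans i2) i3, ← integral_add_adjacent_intervals i1 i2]
  rw [c _ _ _ (fun s => 4 * (1 - t) * ((t + t ^ 2) * s - s ^ 4 / 4)) e1 (by fun_prop) ?_,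
    c _ _ _ (fun s => 4 * t * ((1 - t) * (-(1 - s) ^ 3 - 3 * t * (1 - s) ^ 2 / 2 + t ^ 2 * s)
      + (1 - s) ^ 4 / 2)) e2 (by fun_prop) ?_,
    c _ _ _ (fun s => -(1 - t) * (1 + t - s) ^ 4) e3 (by fun_prop) ?_]
  · simp only [gFive]; ring
  · intro x
    have h := ((hasDerivAt_id' x).const_sub (1 + t)).pow 4 |>.const_mul (-(1 - t))
    refine h.congr_deriv ?_
    norm_num; ring
  · intro x
    have u := (hasDerivAt_id' x).const_sub 1
    have h := ((((u.pow 3).neg.sub (((u.pow 2).const_mul (3 * t)).div_const 2)).add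
      ((hasDerivAt_id' x).const_mul (t ^ 2))).const_mul (1 - t)
      |>.add ((u.pow 4).div_const 2)).const_mul (4 * t)
    refine h.congr_deriv ?_
    push_cast; ring
  · intro x
    have h := (((hasDerivAt_id' x).const_mul (t + t ^ 2)).sub
      (((hasDerivAt_id' x).pow 4).div_const 4)).const_mul (4 * (1 - t))
    refine h.congr_deriv ?_
    norm_num

/-- The weighted computation `S^g(W^{E_W}_{••}; E_l) = 3/4`: for any soliton weight `ξ`
(i.e. any root of the displayed constraint),
`∫₀¹ e^{−(4t−2)ξ} (∫₀^{1+t} V(t,s) ds) dt = (3/4)·∫₀¹ e^{−(4t−2)ξ} g₅(t) dt`. -/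
theorem Sg_WEW_El (ξ : ℝ)
    (hξ : (∫ t in (0:ℝ)..1, (4 * t - 2) * Real.exp (-(4 * t - 2) * ξ) * gFive t) = 0) :
    (∫ t in (0:ℝ)..1,
        Real.exp (-(4 * t - 2) * ξ) * (∫ s in (0:ℝ)..(1 + t), VolEW t s))
      = 3 / 4 * ∫ t in (0:ℝ)..1, Real.exp (-(4 * t - 2) * ξ) * gFive t := by
  have hg : Continuous gFive := by unfold gFive; fun_prop
  have key : (∫ t in (0:ℝ)..1,
        Real.exp (-(4 * t - 2) * ξ) * (∫ s in (0:ℝ)..(1 + t), VolEW t s)) =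
      ∫ t in (0:ℝ)..1, (3 / 4 * (Real.exp (-(4 * t - 2) * ξ) * gFive t) +
        1 / 8 * ((4 * t - 2) * Real.exp (-(4 * t - 2) * ξ) * gFive t)) := by
    apply integral_congr
    intro t ht
    rw [Set.uIcc_of_le zero_le_one] at ht
    simp only [inner_VolEW t ht.1 ht.2]
    ring
  rw [key, integral_add (Continuous.intervalIntegrable (by fun_prop) _ _)
    (Continuous.intervalIntegrable (by fun_prop) _ _), intervalIntegral.integral_const_mul,
    intervalIntegral.integral_const_mul, hξ]
  ring
end
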